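/- Let n ≥ 2 be an integer, r > 0, and let Ω ⊆ ℝⁿ be a nonempty bounded open set which equals the interior of its closure. Suppose that the Lebesgue measure of Ω equals the Lebesgue measure of an open ball of radius r in ℝⁿ, and that the (n−1)-dimensional Hausdorff measure of the topological boundary of Ω equals the (n−1)-dimensional Hausdorff measure of a Euclidean sphere of radius r in ℝⁿ. Then there exists c ∈ ℝⁿ such that Ω is the open ball of radius r centered at c. -/

import Mathlib

/-- Euclidean `n`-space. -/
abbrev Euc (n : ℕ) := EuclideanSpace ℝ (Fin n)

noncomputable section

open MeasureTheory Metric Set Filter Topology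
open scoped ENNReal NNReal Pointwise

/-- Prepending a coordinate identifies `ℝ × ℝᵐ` with `ℝᵐ⁺¹`. -/
def consE (m : ℕ) : ℝ × Euc m ≃ᵐ Euc (m + 1) :=
  ((MeasurableEquiv.refl ℝ).prodCongr (MeasurableEquiv.toLp 2 (Fin m → ℝ)).symm).trans
    ((MeasurableEquiv.piFinSuccAbove (fun _ => ℝ) 0).symm.trans
      (MeasurableEquiv.toLp 2 (Fin (m + 1) → ℝ)))

/-- Dropping the first coordinate. -/
def tailE {m : ℕ} (x : Euc (m + 1)) : Euc m := ((consE m).symm x).2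

variable {m n : ℕ}

@[simp] lemma consE_zero (p : ℝ × Euc m) : consE m p 0 = p.1 := rfl

@[simp] lemma consE_succ (p : ℝ × Euc m) (j : Fin m) : consE m p j.succ = p.2 j := rfl

@[simp] lemma tailE_apply (x : Euc (m + 1)) (j : Fin m) : tailE x j = x j.succ := rfl

@[simp] lemma consE_symm_apply (x : Euc (m + 1)) : (consE m).symm x = (x 0, tailE x) := rfl

@[simp] lemma tailE_consE (p : ℝ × Euc m) : tailE (consE m p) = p.2 := by
  ext j; simp

@[simp] lemma consE_tailE (x : Euc (m + 1)) : consE m (x 0, tailE x) = x :=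
  (consE m).apply_symm_apply x

lemma measurePreserving_consE (m : ℕ) : MeasurePreserving (consE m) :=
  (PiLp.volume_preserving_toLp (Fin (m + 1))).comp
    (((volume_preserving_piFinSuccAbove (fun _ : Fin (m + 1) => ℝ) 0).symm _).comp
      ((MeasurePreserving.id volume).prod (PiLp.volume_preserving_ofLp (Fin m))))

lemma measurable_tailE : Measurable (tailE : Euc (m + 1) → Euc m) :=
  measurable_snd.comp (consE m).symm.measurable

lemma norm_sq_eq_head_tail (x : Euc (m + 1)) : ‖x‖ ^ 2 = x 0 ^ 2 + ‖tailE x‖ ^ 2 := by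
  simp [EuclideanSpace.norm_sq_eq, Fin.sum_univ_succ]

lemma tailE_sub (x y : Euc (m + 1)) : tailE (x - y) = tailE x - tailE y := by
  ext j; simp

lemma lipschitzWith_tailE : LipschitzWith 1 (tailE : Euc (m + 1) → Euc m) := by
  refine LipschitzWith.of_dist_le_mul fun x y => ?_
  rw [NNReal.coe_one, one_mul, dist_eq_norm, dist_eq_norm, ← tailE_sub]
  have h := norm_sq_eq_head_tail (x - y)
  exact le_of_sq_le_sq (by nlinarith [sq_nonneg ((x - y) 0)]) (norm_nonneg _)

/-- The `j`-th standard basis vector. -/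
abbrev stdE (j : Fin n) : Euc n := EuclideanSpace.single j 1

lemma consE_add_stdE_zero (p : ℝ × Euc m) (t : ℝ) :
    consE m p + t • stdE 0 = consE m (p.1 + t, p.2) := by
  ext j; refine Fin.cases ?_ (fun j => ?_) j <;> simp

lemma consE_add_stdE_succ (p : ℝ × Euc m) (j : Fin m) (t : ℝ) :
    consE m p + t • stdE j.succ = consE m (p.1, p.2 + t • stdE j) := by
  ext i; refine Fin.cases ?_ (fun i => ?_) i <;> simp [Fin.succ_ne_zero]

/-- Any unit vector is the image of the first basis vector under a linear isometry. -/
lemma exists_isometry_stdE_zero (v : Euc (m + 1)) (hv : ‖v‖ = 1) :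
    ∃ L : Euc (m + 1) ≃ₗᵢ[ℝ] Euc (m + 1), L (stdE 0) = v := by
  have hcard : Module.finrank ℝ (Euc (m + 1)) = Fintype.card (Fin (m + 1)) := by simp
  obtain ⟨b, hb⟩ := Orthonormal.exists_orthonormalBasis_extension_of_card_eq
    (𝕜 := ℝ) hcard (v := fun _ : Fin (m + 1) => v) (s := {0}) (by
      rw [orthonormal_iff_ite]
      rintro ⟨i, rfl⟩ ⟨j, rfl⟩
      simp [hv])
  refine ⟨b.repr.symm, ?_⟩
  have := hb 0 rfl
  simpa using this

lemma volume_linearIsometryEquiv_preimage (L : Euc n ≃ₗᵢ[ℝ] Euc n) (s : Set (Euc n)) :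
    volume (L ⁻¹' s) = volume s :=
  L.measurePreserving.measure_preimage_equiv (f := L.toMeasurableEquiv) s

lemma LipschitzWith.euclideanHausdorffMeasure_image_le {X Y : Type*}
    [MetricSpace X] [MeasurableSpace X] [BorelSpace X] [MetricSpace Y] [MeasurableSpace Y]
    [BorelSpace Y] {f : X → Y} (hf : LipschitzWith 1 f) (d : ℕ) (s : Set X) :
    μHE[d] (f '' s) ≤ μHE[d] s := by
  simp only [Measure.euclideanHausdorffMeasure_def, Measure.smul_apply]
  gcongr
  simpa using hf.hausdorffMeasure_image_le (Nat.cast_nonneg d) s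

/-- Sweeping a set along a segment of length `h` in the direction of the first axis produces a
set of volume at most `h` times the surface measure. -/
lemma volume_sweep_stdE_le {S : Set (Euc (m + 1))} {h : ℝ} (hh : 0 < h) :
    volume {x : Euc (m + 1) | ∃ s ∈ Icc 0 h, x - s • stdE 0 ∈ S}
      ≤ ENNReal.ofReal h * μHE[m] S := by
  have key : ∀ η : ℝ, 0 < η → volume {x : Euc (m + 1) | ∃ s ∈ Icc 0 h, x - s • stdE 0 ∈ S}
      ≤ ENNReal.ofReal (h + η) * μHE[m] S := by
    intro η hη
    set slab : ℤ → Set (Euc (m + 1)) := fun i => {x | ⌊x 0 / η⌋ = i} with hslab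
    have hmeas : ∀ i, MeasurableSet (slab i) := fun i => by
      have : Measurable fun x : Euc (m + 1) => ⌊x 0 / η⌋ := by fun_prop
      exact this (measurableSet_singleton i)
    have hsub : {x : Euc (m + 1) | ∃ s ∈ Icc 0 h, x - s • stdE 0 ∈ S} ⊆
        ⋃ i : ℤ, (consE m).symm ⁻¹' (Icc (i * η) (i * η + (h + η)) ×ˢ (tailE '' (S ∩ slab i))) := by
      rintro x ⟨s, ⟨hs0, hsh⟩, hxS⟩
      set y := x - s • stdE 0 with hy
      have hy0 : x 0 = y 0 + s := by simp [hy]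
      refine mem_iUnion.2 ⟨⌊y 0 / η⌋, ?_, y, ⟨hxS, rfl⟩, ?_⟩
      · have h1 := Int.floor_le (y 0 / η)
        have h2 := Int.lt_floor_add_one (y 0 / η)
        rw [le_div_iff₀ hη] at h1
        rw [div_lt_iff₀ hη] at h2
        simp only [consE_symm_apply, hy0, mem_Icc]
        constructor <;> nlinarith
      · ext j; simp [hy, Fin.succ_ne_zero]
    calc _ ≤ _ := measure_mono hsub
      _ ≤ ∑' i : ℤ, _ := measure_iUnion_le _
      _ = ∑' i : ℤ, ENNReal.ofReal (h + η) * μHE[m] (tailE '' (S ∩ slab i)) := by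
        refine tsum_congr fun i => ?_
        rw [((measurePreserving_consE m).symm (consE m)).measure_preimage_equiv,
          Measure.volume_eq_prod, Measure.prod_prod, Real.volume_Icc,
          EuclideanSpace.euclideanHausdorffMeasure_eq_volume]
        congr 2; ring
      _ ≤ ∑' i : ℤ, ENNReal.ofReal (h + η) * μHE[m] (S ∩ slab i) := by
        gcongr; exact lipschitzWith_tailE.euclideanHausdorffMeasure_image_le m _
      _ = ENNReal.ofReal (h + η) * μHE[m] S := by
        rw [ENNReal.tsum_mul_left]
        congr 1
        have hdis : Pairwise (Function.onFun Disjoint slab) := fun i j hij =>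
          Set.disjoint_left.2 fun x hx hx' => hij (hx.symm.trans hx')
        have hU : ⋃ i, slab i = univ := eq_univ_of_forall fun x => mem_iUnion.2 ⟨_, rfl⟩
        have := measure_iUnion (μ := μHE[m].restrict S) hdis hmeas
        rw [hU, Measure.restrict_apply_univ] at this
        rw [this]
        exact tsum_congr fun i => by rw [Measure.restrict_apply (hmeas i), inter_comm]
  rcases eq_or_ne (μHE[m] S) ⊤ with htop | htop
  · simp [htop, ENNReal.mul_top, hh]
  · have hlim : Tendsto (fun η : ℝ => ENNReal.ofReal (h + η) * μHE[m] S) (𝓝[>] 0)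
        (𝓝 (ENNReal.ofReal (h + 0) * μHE[m] S)) := by
      refine ENNReal.Tendsto.mul_const (ENNReal.tendsto_ofReal ?_) (Or.inr htop)
      exact ((continuous_const.add continuous_id).tendsto 0).mono_left nhdsWithin_le_nhds
    rw [add_zero] at hlim
    exact ge_of_tendsto hlim (eventually_mem_nhdsWithin.mono fun η hη => key η hη)

/-- Sweeping a set along a segment of length `h` produces a set of volume at most `h` times the
surface measure. -/
lemma volume_sweep_le {S : Set (Euc (m + 1))} {h : ℝ} (hh : 0 < h) {v : Euc (m + 1)}
    (hv : ‖v‖ = 1) :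
    volume {x : Euc (m + 1) | ∃ s ∈ Icc 0 h, x - s • v ∈ S} ≤ ENNReal.ofReal h * μHE[m] S := by
  obtain ⟨L, hL⟩ := exists_isometry_stdE_zero v hv
  have h1 := volume_sweep_stdE_le (S := L ⁻¹' S) hh
  rw [L.isometry.euclideanHausdorffMeasure_preimage, L.surjective.range_eq, inter_univ] at h1
  rw [← volume_linearIsometryEquiv_preimage L]
  convert h1 using 2
  ext x
  simp [hL]

/-- The volume of the part of `Ω` within distance `δ` of a point. -/
def localVolume (Ω : Set (Euc n)) (δ : ℝ) (y : Euc n) : ℝ := volume.real (Ω ∩ ball y δ)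

lemma measure_inter_ball_ne_top (Ω : Set (Euc n)) (δ : ℝ) (y : Euc n) :
    volume (Ω ∩ ball y δ) ≠ ⊤ :=
  ((measure_mono inter_subset_right).trans_lt measure_ball_lt_top).ne

lemma localVolume_nonneg (Ω : Set (Euc n)) (δ : ℝ) (y : Euc n) : 0 ≤ localVolume Ω δ y :=
  measureReal_nonneg

lemma IsPreconnected.inter_frontier_nonempty_of_mem {X : Type*} [TopologicalSpace X]
    {s t : Set X} (hs : IsPreconnected s) (h1 : (s ∩ t).Nonempty) (h2 : (s ∩ tᶜ).Nonempty) :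
    (s ∩ frontier t).Nonempty := by
  by_contra h
  rw [not_nonempty_iff_eq_empty, ← disjoint_iff_inter_eq_empty] at h
  have hcov : s ⊆ interior t ∪ interior tᶜ := fun x hx => by
    have hx' := disjoint_left.1 h hx
    rw [frontier_eq_closure_inter_closure, mem_inter_iff, not_and_or, closure_compl,
      ← mem_compl_iff, ← interior_compl, mem_compl_iff, not_not] at hx'
    exact hx'.symm
  obtain ⟨x, hx, hxt⟩ := h1
  obtain ⟨y, hy, hyt⟩ := h2
  obtain ⟨z, -, hz1, hz2⟩ := hs _ _ isOpen_interior isOpen_interior hcov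
    ⟨x, hx, (hcov hx).resolve_right fun h => interior_subset h hxt⟩
    ⟨y, hy, (hcov hy).resolve_left fun h => hyt (interior_subset h)⟩
  exact interior_subset hz2 (interior_subset hz1)

lemma localVolume_sub_smul_le {Ω : Set (Euc (m + 1))}
    (hfin : μHE[m] (frontier Ω) ≠ ⊤) {δ h : ℝ} (hh : 0 < h) {v : Euc (m + 1)} (hv : ‖v‖ = 1)
    (y : Euc (m + 1)) :
    localVolume Ω δ (y - h • v) ≤
      localVolume Ω δ y + h * μHE[m].real (frontier Ω ∩ ball y (δ + h)) := by
  set S := frontier Ω ∩ ball y (δ + h)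
  have hS : μHE[m] S ≠ ⊤ := ((measure_mono inter_subset_left).trans_lt hfin.lt_top).ne
  have htrans : volume (Ω ∩ ball (y - h • v) δ) =
      volume ((fun x => x - h • v) ⁻¹' (Ω ∩ ball (y - h • v) δ)) := by
    simp_rw [sub_eq_add_neg]
    rw [measure_preimage_add_right]
  have hsub : (fun x => x - h • v) ⁻¹' (Ω ∩ ball (y - h • v) δ) ⊆
      (Ω ∩ ball y δ) ∪ {x | ∃ s ∈ Icc 0 h, x - s • v ∈ S} := by
    rintro x ⟨hx, hxb⟩
    have hxb' : x ∈ ball y δ := by simpa using hxb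
    by_cases hxΩ : x ∈ Ω
    · exact Or.inl ⟨hxΩ, hxb'⟩
    right
    have hseg : IsPreconnected ((fun s : ℝ => x - s • v) '' Icc 0 h) :=
      isPreconnected_Icc.image _ (by fun_prop)
    obtain ⟨z, ⟨s, hs, rfl⟩, hz⟩ := hseg.inter_frontier_nonempty_of_mem (t := Ω)
      ⟨_, ⟨h, right_mem_Icc.2 hh.le, rfl⟩, hx⟩
      ⟨x, ⟨0, left_mem_Icc.2 hh.le, by simp⟩, hxΩ⟩
    refine ⟨s, hs, hz, ?_⟩
    have h1 : dist (x - s • v) x ≤ h := by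
      simp [norm_smul, hv, abs_of_nonneg hs.1, hs.2]
    have h2 : dist x y < δ := hxb'
    rw [mem_ball]
    linarith [dist_triangle (x - s • v) x y]
  have hle : volume (Ω ∩ ball (y - h • v) δ) ≤
      volume (Ω ∩ ball y δ) + ENNReal.ofReal h * μHE[m] S := by
    rw [htrans]
    exact (measure_mono hsub).trans ((measure_union_le _ _).trans
      (add_le_add le_rfl (volume_sweep_le hh hv)))
  have hne : ENNReal.ofReal h * μHE[m] S ≠ ⊤ := ENNReal.mul_ne_top ENNReal.ofReal_ne_top hS
  have := ENNReal.toReal_mono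
    (ENNReal.add_ne_top.2 ⟨measure_inter_ball_ne_top Ω δ y, hne⟩) hle
  rwa [ENNReal.toReal_add (measure_inter_ball_ne_top Ω δ y) hne, ENNReal.toReal_mul,
    ENNReal.toReal_ofReal hh.le] at this

lemma lipschitzWith_localVolume {Ω : Set (Euc (m + 1))}
    (hfin : μHE[m] (frontier Ω) ≠ ⊤) (δ : ℝ) :
    LipschitzWith (μHE[m] (frontier Ω)).toNNReal (localVolume Ω δ) := by
  refine LipschitzWith.of_le_add_mul _ fun y z => ?_
  rcases eq_or_ne y z with rfl | hne
  · simp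
  have hpos : 0 < ‖z - y‖ := norm_pos_iff.2 (sub_ne_zero.2 hne.symm)
  have h := localVolume_sub_smul_le hfin (δ := δ) hpos (v := ‖z - y‖⁻¹ • (z - y))
    (by rw [norm_smul, norm_inv, norm_norm, inv_mul_cancel₀ hpos.ne']) z
  rw [smul_inv_smul₀ hpos.ne', sub_sub_cancel] at h
  refine h.trans (add_le_add le_rfl ?_)
  rw [mul_comm, dist_comm, dist_eq_norm]
  gcongr
  exact ENNReal.toReal_mono hfin (measure_mono inter_subset_left)

lemma norm_fderiv_localVolume_le {Ω : Set (Euc (m + 1))}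
    (hfin : μHE[m] (frontier Ω) ≠ ⊤) {δ η : ℝ} (hη : 0 < η) {y : Euc (m + 1)}
    (hy : DifferentiableAt ℝ (localVolume Ω δ) y) :
    ‖fderiv ℝ (localVolume Ω δ) y‖ ≤ μHE[m].real (frontier Ω ∩ ball y (δ + η)) := by
  set c := μHE[m].real (frontier Ω ∩ ball y (δ + η))
  have hunit : ∀ v : Euc (m + 1), ‖v‖ = 1 → fderiv ℝ (localVolume Ω δ) y (-v) ≤ c := by
    intro v hv
    have hd := (hy.hasFDerivAt.hasLineDerivAt (-v)).tendsto_slope_zero_right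
    refine le_of_tendsto hd ?_
    filter_upwards [Ioo_mem_nhdsGT hη] with h hh
    have := localVolume_sub_smul_le hfin (δ := δ) hh.1 hv y
    have hmono : μHE[m].real (frontier Ω ∩ ball y (δ + h)) ≤ c := by
      refine ENNReal.toReal_mono ((measure_mono inter_subset_left).trans_lt hfin.lt_top).ne
        (measure_mono (inter_subset_inter_right _ (ball_subset_ball ?_)))
      linarith [hh.2]
    have h0 := hh.1
    rw [smul_eq_mul, inv_mul_le_iff₀ h0]
    simp only [smul_neg, ← sub_eq_add_neg]
    nlinarith
  refine ContinuousLinearMap.opNorm_le_of_unit_norm measureReal_nonneg fun v hv => ?_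
  rw [Real.norm_eq_abs, abs_le]
  have h1 := hunit v hv
  have h2 := hunit (-v) (by simpa using hv)
  rw [map_neg] at h1
  rw [neg_neg] at h2
  exact ⟨by linarith, h2⟩

/-- Lower partial derivative of the `j`-th component of a vector field along the `j`-th axis. -/
def lowerDeriv (f : Euc n → Euc n) (j : Fin n) (x : Euc n) : ℝ≥0∞ :=
  liminf (fun k : ℕ => ENNReal.ofReal
    (((k : ℝ) + 1) * (f (x + ((k : ℝ) + 1)⁻¹ • stdE j) j - f x j))) atTop

lemma measurable_lowerDeriv {f : Euc n → Euc n} (hf : Measurable f) (j : Fin n) :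
    Measurable (lowerDeriv f j) := by
  refine Measurable.liminf fun k => ENNReal.measurable_ofReal.comp ?_
  have : Measurable fun x => f (x + ((k : ℝ) + 1)⁻¹ • stdE j) := hf.comp (measurable_add_const _)
  fun_prop

lemma tendsto_inv_nat_add_one_nhdsGT :
    Tendsto (fun k : ℕ => ((k : ℝ) + 1)⁻¹) atTop (𝓝[>] 0) := by
  refine tendsto_nhdsWithin_iff.2 ⟨?_, Eventually.of_forall fun k => ?_⟩
  · simpa using tendsto_one_div_add_atTop_nhds_zero_nat (𝕜 := ℝ)
  · exact mem_Ioi.2 (by positivity)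

/-- Integration by parts, as an inequality, for a field with monotone components. -/
lemma lintegral_mul_lowerDeriv_le {u : Euc n → ℝ} {C : ℝ≥0} (hu : LipschitzWith C u)
    (hu0 : ∀ x, 0 ≤ u x) {M : ℝ} (hM : ∀ x, u x ≠ 0 → ‖x‖ < M) {f : Euc n → Euc n}
    (hf : Measurable f) (hf1 : ∀ x, ‖f x‖ ≤ 1) (j : Fin n)
    (hmono : ∀ x (t : ℝ), 0 ≤ t → f x j ≤ f (x + t • stdE j) j) :
    0 ≤ ∫ x, lineDeriv ℝ u x (-stdE j) * (ball 0 (M + 1)).indicator (fun x => f x j) x ∧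
    ∫⁻ x, ENNReal.ofReal (u x) * lowerDeriv f j x ≤ ENNReal.ofReal
      (∫ x, lineDeriv ℝ u x (-stdE j) * (ball 0 (M + 1)).indicator (fun x => f x j) x) := by
  set g : Euc n → ℝ := (ball 0 (M + 1)).indicator (fun x => f x j) with hg
  have hfj : Measurable fun x => f x j := by fun_prop
  have hfj1 : ∀ x, ‖f x j‖ ≤ 1 := fun x => (PiLp.norm_apply_le (f x) j).trans (hf1 x)
  have hgint : Integrable g := by
    refine (integrable_indicator_iff measurableSet_ball).2 ?_
    exact Measure.integrableOn_of_bounded (M := 1) measure_ball_lt_top.ne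
      hfj.aestronglyMeasurable (Eventually.of_forall hfj1)
  have huint : Integrable u := by
    refine hu.continuous.integrable_of_hasCompactSupport
      (HasCompactSupport.of_support_subset_isCompact (isCompact_closedBall 0 M) fun x hx => ?_)
    simpa using (hM x hx).le
  have hlim := (hu.integral_inv_smul_sub_mul_tendsto_integral_lineDeriv_mul hgint
    (-stdE j)).comp tendsto_inv_nat_add_one_nhdsGT
  set a : ℕ → ℝ := fun k => ∫ x, u x * (((k : ℝ) + 1) *
    (f (x + ((k : ℝ) + 1)⁻¹ • stdE j) j - f x j)) with ha
  have hnonneg : ∀ (k : ℕ) x, 0 ≤ u x * (((k : ℝ) + 1) *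
      (f (x + ((k : ℝ) + 1)⁻¹ • stdE j) j - f x j)) := fun k x =>
    mul_nonneg (hu0 x) (mul_nonneg (by positivity)
      (sub_nonneg.2 (hmono x _ (by positivity))))
  have hmulint : ∀ {w : Euc n → ℝ}, Measurable w → (∀ x, ‖w x‖ ≤ 1) →
      Integrable fun x => u x * w x := fun hw hw1 =>
    huint.mul_bdd (c := 1) hw.aestronglyMeasurable (Eventually.of_forall hw1)
  have hak : ∀ k : ℕ, a k = ∫ x, ((((k : ℝ) + 1)⁻¹)⁻¹ •
      (u (x + ((k : ℝ) + 1)⁻¹ • (-stdE j)) - u x)) * g x := by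
    intro k
    set t : ℝ := ((k : ℝ) + 1)⁻¹ with ht
    have ht0 : 0 < t := by positivity
    have ht1 : t ≤ 1 := by
      rw [ht]; exact inv_le_one_of_one_le₀ (by linarith [(Nat.cast_nonneg k : (0:ℝ) ≤ k)])
    have hkt : (k : ℝ) + 1 = t⁻¹ := by simp [ht]
    have hshift : ∫ x, u x * f (x + t • stdE j) j = ∫ x, u (x + t • (-stdE j)) * f x j := by
      rw [← integral_add_right_eq_self (fun x => u (x + t • (-stdE j)) * f x j) (t • stdE j)]
      simp
    have hf' : Measurable fun x => f (x + t • stdE j) j := hfj.comp (measurable_add_const _)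
    have hui : Integrable fun x => u (x + t • (-stdE j)) * f x j :=
      (huint.comp_add_right _).mul_bdd (c := 1) hfj.aestronglyMeasurable
        (Eventually.of_forall hfj1)
    calc a k = t⁻¹ * ((∫ x, u x * f (x + t • stdE j) j) - ∫ x, u x * f x j) := by
          rw [← integral_sub (hmulint hf' fun x => hfj1 _) (hmulint hfj hfj1),
            ← integral_const_mul]
          simp only [ha]
          congr 1 with x
          rw [← hkt]; ring
      _ = t⁻¹ * ∫ x, (u (x + t • (-stdE j)) - u x) * f x j := by
          rw [hshift, ← integral_sub hui (hmulint hfj hfj1)]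
          congr 2 with x; ring
      _ = _ := by
          rw [← integral_const_mul]
          congr 1 with x
          rw [smul_eq_mul, mul_assoc]
          congr 1
          by_cases hx : x ∈ ball (0 : Euc n) (M + 1)
          · rw [hg, indicator_of_mem hx]
          · rw [hg, indicator_of_notMem hx]
            have hx' : M + 1 ≤ ‖x‖ := by simpa using hx
            have h1 : u x = 0 := by
              by_contra h; linarith [hM x h]
            have h2 : u (x + t • (-stdE j)) = 0 := by
              by_contra h
              have h3 := hM _ h
              have h4 : ‖x‖ ≤ ‖x + t • (-stdE j)‖ + ‖t • stdE j‖ := by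
                simpa using norm_add_le (x + t • (-stdE j)) (t • stdE j)
              have h5 : ‖t • stdE j‖ = t := by simp [norm_smul, abs_of_pos ht0]
              linarith
            rw [h1, h2]; simp
  have hlim' : Tendsto a atTop (𝓝 (∫ x, lineDeriv ℝ u x (-stdE j) * g x)) :=
    hlim.congr fun k => (hak k).symm
  refine ⟨ge_of_tendsto' hlim' fun k => integral_nonneg (hnonneg k), ?_⟩
  have hintg : ∀ k : ℕ, Integrable fun x => u x * (((k : ℝ) + 1) *
      (f (x + ((k : ℝ) + 1)⁻¹ • stdE j) j - f x j)) := fun k => by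
    have hf' : Measurable fun x => f (x + ((k : ℝ) + 1)⁻¹ • stdE j) j :=
      hfj.comp (measurable_add_const _)
    have := ((hmulint hf' fun x => hfj1 _).sub (hmulint hfj hfj1)).const_mul ((k : ℝ) + 1)
    refine this.congr (Eventually.of_forall fun x => ?_)
    simp only [Pi.sub_apply]; ring
  calc ∫⁻ x, ENNReal.ofReal (u x) * lowerDeriv f j x
      = ∫⁻ x, liminf (fun k : ℕ => ENNReal.ofReal (u x * (((k : ℝ) + 1) *
          (f (x + ((k : ℝ) + 1)⁻¹ • stdE j) j - f x j)))) atTop := by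
        congr 1 with x
        rw [lowerDeriv, ← ENNReal.liminf_const_mul_of_ne_top ENNReal.ofReal_ne_top]
        simp_rw [ENNReal.ofReal_mul (hu0 x)]
    _ ≤ liminf (fun k : ℕ => ∫⁻ x, ENNReal.ofReal (u x * (((k : ℝ) + 1) *
          (f (x + ((k : ℝ) + 1)⁻¹ • stdE j) j - f x j)))) atTop := by
        refine lintegral_liminf_le' fun k =>
          (hintg k).aestronglyMeasurable.aemeasurable.ennreal_ofReal
    _ = liminf (fun k : ℕ => ENNReal.ofReal (a k)) atTop := by
        congr 1 with k
        rw [ha, ofReal_integral_eq_lintegral_ofReal (hintg k) (Eventually.of_forall (hnonneg k))]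
    _ = _ := (ENNReal.tendsto_ofReal hlim').liminf_eq

lemma lintegral_measure_inter_ball (μ : Measure (Euc n)) {S : Set (Euc n)} (hS : μ S ≠ ⊤)
    (ρ : ℝ) : ∫⁻ x, μ (S ∩ ball x ρ) = volume (ball (0 : Euc n) ρ) * μ S := by
  have : IsFiniteMeasure (μ.restrict S) := ⟨by simpa using hS.lt_top⟩
  have hset : MeasurableSet {p : Euc n × Euc n | dist p.2 p.1 < ρ} :=
    (isOpen_lt (by fun_prop) continuous_const).measurableSet
  have h1 := Measure.prod_apply (μ := (volume : Measure (Euc n))) (ν := μ.restrict S) hset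
  have h2 := Measure.prod_apply_symm (μ := (volume : Measure (Euc n))) (ν := μ.restrict S) hset
  rw [h1] at h2
  have e1 : ∀ x, μ.restrict S (Prod.mk x ⁻¹' {p : Euc n × Euc n | dist p.2 p.1 < ρ}) =
      μ (S ∩ ball x ρ) := fun x => by
    rw [inter_comm, ← Measure.restrict_apply measurableSet_ball]; rfl
  have e2 : ∀ y, volume ((fun x => (x, y)) ⁻¹' {p : Euc n × Euc n | dist p.2 p.1 < ρ}) =
      volume (ball (0 : Euc n) ρ) := fun y => by
    rw [← Measure.addHaar_ball_center volume y]
    congr 1; ext x; simp [dist_comm]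
  simp_rw [e1, e2] at h2
  rw [h2, lintegral_const, Measure.restrict_apply_univ]

/-- A divergence inequality: a field bounded by one, each of whose components is monotone along
its own axis, has total lower divergence in `Ω` at most the surface measure of `∂Ω`. -/
theorem lintegral_sum_lowerDeriv_le {Ω : Set (Euc (m + 1))} (hop : IsOpen Ω)
    (hbd : Bornology.IsBounded Ω) {f : Euc (m + 1) → Euc (m + 1)}
    (hf : Measurable f) (hf1 : ∀ x, ‖f x‖ ≤ 1)
    (hmono : ∀ j x (t : ℝ), 0 ≤ t → f x j ≤ f (x + t • stdE j) j) :
    ∫⁻ x in Ω, ∑ j, lowerDeriv f j x ≤ μHE[m] (frontier Ω) := by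
  by_cases hfin : μHE[m] (frontier Ω) = ⊤
  · simp [hfin]
  obtain ⟨K, hK⟩ := hbd.subset_ball 0
  have hδ : ∀ δ : ℝ, 0 < δ → ∫⁻ x in {x | ball x δ ⊆ Ω}, ∑ j, lowerDeriv f j x
      ≤ μHE[m] (frontier Ω) := by
    intro δ hδ
    set u := localVolume Ω δ with hu
    have hL := lipschitzWith_localVolume hfin δ
    have hM : ∀ x, u x ≠ 0 → ‖x‖ < K + δ := by
      intro x hx
      have hne : (Ω ∩ ball x δ).Nonempty := by
        by_contra h
        rw [not_nonempty_iff_eq_empty] at h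
        exact hx (by simp [hu, localVolume, h])
      obtain ⟨z, hz, hzx⟩ := hne
      have h1 : ‖z‖ < K := by simpa using hK hz
      have h2 : dist x z < δ := by rw [dist_comm]; exact hzx
      rw [dist_eq_norm] at h2
      linarith [norm_le_norm_add_norm_sub' x z]
    have hby := fun j => lintegral_mul_lowerDeriv_le hL (localVolume_nonneg Ω δ) hM hf hf1 j
      (hmono j)
    set g : Fin (m + 1) → Euc (m + 1) → ℝ :=
      fun j => (ball 0 (K + δ + 1)).indicator (fun x => f x j) with hg
    have hgint : ∀ j, Integrable fun x => lineDeriv ℝ u x (-stdE j) * g j x := by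
      intro j
      have hfj : Measurable fun x => f x j := by fun_prop
      have hgi : Integrable (g j) := by
        refine (integrable_indicator_iff measurableSet_ball).2 ?_
        exact Measure.integrableOn_of_bounded (M := 1) measure_ball_lt_top.ne
          hfj.aestronglyMeasurable
          (Eventually.of_forall fun x => (PiLp.norm_apply_le (f x) j).trans (hf1 x))
      exact hgi.bdd_mul (aestronglyMeasurable_lineDeriv hL.continuous _)
        (Eventually.of_forall fun x => norm_lineDeriv_le_of_lipschitz ℝ hL)
    have hptw : ∀ η : ℝ, 0 < η → ∀ᵐ x, ‖∑ j, lineDeriv ℝ u x (-stdE j) * g j x‖ₑ ≤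
        μHE[m] (frontier Ω ∩ ball x (δ + η)) := by
      intro η hη
      filter_upwards [hL.ae_differentiableAt] with x hx
      have hfd := norm_fderiv_localVolume_le hfin hη hx
      have hsum : ∑ j, lineDeriv ℝ u x (-stdE j) * g j x =
          fderiv ℝ u x (-(ball 0 (K + δ + 1)).indicator f x) := by
        have : ∀ j, lineDeriv ℝ u x (-stdE j) = fderiv ℝ u x (-stdE j) := fun j =>
          hx.lineDeriv_eq_fderiv
        simp_rw [this]
        by_cases hxb : x ∈ ball (0 : Euc (m + 1)) (K + δ + 1)
        · simp only [hg, indicator_of_mem hxb]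
          have hdec : f x = ∑ j, f x j • stdE j := by
            ext i; simp [Finset.sum_apply, Pi.single_apply]
          conv_rhs => rw [hdec]
          simp [mul_comm]
        · simp [hg, indicator_of_notMem hxb]
      have hb : ‖∑ j, lineDeriv ℝ u x (-stdE j) * g j x‖ ≤
          μHE[m].real (frontier Ω ∩ ball x (δ + η)) := by
        rw [hsum]
        refine (ContinuousLinearMap.le_opNorm _ _).trans ?_
        refine (mul_le_of_le_one_right (norm_nonneg _) ?_).trans hfd
        rw [norm_neg]
        exact (norm_indicator_le_norm_self _ _).trans (hf1 x)
      rw [← ofReal_norm]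
      exact (ENNReal.ofReal_le_ofReal hb).trans (ENNReal.ofReal_toReal_le)
    have htot : ∀ η : ℝ, 0 < η → ∫⁻ x, ENNReal.ofReal (u x) * ∑ j, lowerDeriv f j x ≤
        volume (ball (0 : Euc (m + 1)) (δ + η)) * μHE[m] (frontier Ω) := by
      intro η hη
      calc ∫⁻ x, ENNReal.ofReal (u x) * ∑ j, lowerDeriv f j x
          = ∑ j, ∫⁻ x, ENNReal.ofReal (u x) * lowerDeriv f j x := by
            rw [← lintegral_finsetSum]
            · simp_rw [Finset.mul_sum]
            · intro j _
              exact (hL.continuous.measurable.ennreal_ofReal).mul (measurable_lowerDeriv hf j)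
        _ ≤ ∑ j, ENNReal.ofReal (∫ x, lineDeriv ℝ u x (-stdE j) * g j x) :=
            Finset.sum_le_sum fun j _ => (hby j).2
        _ = ENNReal.ofReal (∫ x, ∑ j, lineDeriv ℝ u x (-stdE j) * g j x) := by
            rw [integral_finsetSum _ fun j _ => hgint j,
              ENNReal.ofReal_sum_of_nonneg fun j _ => (hby j).1]
        _ ≤ ‖∫ x, ∑ j, lineDeriv ℝ u x (-stdE j) * g j x‖ₑ := by
            rw [← ofReal_norm]; exact ENNReal.ofReal_le_ofReal (Real.le_norm_self _)
        _ ≤ ∫⁻ x, ‖∑ j, lineDeriv ℝ u x (-stdE j) * g j x‖ₑ := enorm_integral_le_lintegral_enorm _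
        _ ≤ ∫⁻ x, μHE[m] (frontier Ω ∩ ball x (δ + η)) := lintegral_mono_ae (hptw η hη)
        _ = _ := lintegral_measure_inter_ball _ hfin _
    have hlim : ∫⁻ x, ENNReal.ofReal (u x) * ∑ j, lowerDeriv f j x ≤
        volume (ball (0 : Euc (m + 1)) δ) * μHE[m] (frontier Ω) := by
      have hcont : Tendsto (fun η : ℝ => volume (ball (0 : Euc (m + 1)) (δ + η)) *
          μHE[m] (frontier Ω)) (𝓝[>] 0)
          (𝓝 (volume (ball (0 : Euc (m + 1)) (δ + 0)) * μHE[m] (frontier Ω))) := by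
        refine ENNReal.Tendsto.mul_const ?_ (Or.inr hfin)
        rw [add_zero, Measure.addHaar_ball_of_pos volume _ hδ]
        have : Tendsto (fun η : ℝ => ENNReal.ofReal ((δ + η) ^ Module.finrank ℝ (Euc (m + 1))) *
            volume (ball (0 : Euc (m + 1)) 1)) (𝓝[>] 0)
            (𝓝 (ENNReal.ofReal ((δ + 0) ^ Module.finrank ℝ (Euc (m + 1))) *
            volume (ball (0 : Euc (m + 1)) 1))) := by
          refine ENNReal.Tendsto.mul_const (ENNReal.tendsto_ofReal ?_)
            (Or.inr measure_ball_lt_top.ne)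
          have hc : Continuous fun η : ℝ => (δ + η) ^ Module.finrank ℝ (Euc (m + 1)) := by fun_prop
          exact (hc.tendsto 0).mono_left nhdsWithin_le_nhds
        rw [add_zero] at this
        refine this.congr' ?_
        filter_upwards [self_mem_nhdsWithin] with η hη
        rw [Measure.addHaar_ball_of_pos volume _ (add_pos hδ hη)]
      rw [add_zero] at hcont
      exact ge_of_tendsto hcont (eventually_mem_nhdsWithin.mono fun η hη => htot η hη)
    have hb0 : volume (ball (0 : Euc (m + 1)) δ) ≠ 0 := (measure_ball_pos _ _ hδ).ne'
    have hbt : volume (ball (0 : Euc (m + 1)) δ) ≠ ⊤ := measure_ball_lt_top.ne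
    have hset : volume (ball (0 : Euc (m + 1)) δ) * ∫⁻ x in {x | ball x δ ⊆ Ω},
        ∑ j, lowerDeriv f j x ≤ ∫⁻ x, ENNReal.ofReal (u x) * ∑ j, lowerDeriv f j x := by
      rw [← lintegral_const_mul' _ _ hbt]
      refine le_trans (setLIntegral_mono_ae' ?_ ?_) (setLIntegral_le_lintegral {x | ball x δ ⊆ Ω} _)
      · have : {x : Euc (m + 1) | ball x δ ⊆ Ω} = {x | ∀ y ∈ Ωᶜ, δ ≤ dist x y} := by
          ext x
          simp only [mem_ofPred_eq, subset_def, mem_ball, mem_compl_iff]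
          refine forall_congr' fun y => ?_
          rw [dist_comm, ← not_lt, not_imp_not]
        rw [this]
        simp only [ofPred_forall]
        exact (isClosed_biInter fun y _ => isClosed_le continuous_const (by fun_prop)).measurableSet
      · refine Eventually.of_forall fun x hx => ?_
        gcongr
        rw [hu, localVolume, inter_eq_self_of_subset_right hx, measureReal_def,
          ENNReal.ofReal_toReal measure_ball_lt_top.ne]
        exact (Measure.addHaar_ball_center volume x δ).ge
    exact (ENNReal.mul_le_mul_iff_right hb0 hbt).1 (hset.trans hlim)
  have hU : Ω = ⋃ k : ℕ, {x | ball x ((k : ℝ) + 1)⁻¹ ⊆ Ω} := by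
    ext x
    simp only [mem_iUnion, mem_ofPred_eq]
    refine ⟨fun hx => ?_, fun ⟨k, hk⟩ => hk (mem_ball_self (by positivity))⟩
    obtain ⟨ε, hε, hball⟩ := Metric.isOpen_iff.1 hop x hx
    obtain ⟨k, hk⟩ := exists_nat_one_div_lt hε
    exact ⟨k, (ball_subset_ball (by simpa using hk.le)).trans hball⟩
  have hdir : Monotone fun k : ℕ => {x | ball x ((k : ℝ) + 1)⁻¹ ⊆ Ω} := fun k l hkl x hx =>
    (ball_subset_ball (by gcongr)).trans hx
  conv_lhs => rw [hU]
  rw [setLIntegral_iUnion_of_directed _ hdir.directed_le]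
  exact iSup_le fun k => hδ _ (by positivity)

/-- The `n`-th power of the radius of the slice of the unit ball at height `u`. -/
def capDensity (n : ℕ) (u : ℝ) : ℝ := √(1 - u ^ 2) ^ n

/-- Total mass of `capDensity`. -/
def capMass (n : ℕ) : ℝ := ∫ u in (-1 : ℝ)..1, capDensity n u

/-- Cumulative distribution function of the normalized `capDensity` on `[-1, 1]`. -/
def capCdf (n : ℕ) (s : ℝ) : ℝ := (∫ u in (-1 : ℝ)..s, capDensity n u) / capMass n

lemma continuous_capDensity (n : ℕ) : Continuous (capDensity n) := by
  unfold capDensity; fun_prop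

lemma capDensity_nonneg (n : ℕ) (u : ℝ) : 0 ≤ capDensity n u := by unfold capDensity; positivity

lemma capDensity_neg (n : ℕ) (u : ℝ) : capDensity n (-u) = capDensity n u := by
  simp [capDensity]

lemma capDensity_pos (n : ℕ) {u : ℝ} (hu : u ∈ Ioo (-1 : ℝ) 1) : 0 < capDensity n u := by
  have : 0 < 1 - u ^ 2 := by nlinarith [hu.1, hu.2]
  unfold capDensity; positivity

lemma intervalIntegral_capDensity_pos (n : ℕ) {a b : ℝ} (ha : -1 ≤ a) (hab : a < b) (hb : b ≤ 1) :
    0 < ∫ u in a..b, capDensity n u :=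
  intervalIntegral.intervalIntegral_pos_of_pos_on ((continuous_capDensity n).intervalIntegrable _ _)
    (fun _ hu => capDensity_pos n ⟨ha.trans_lt hu.1, hu.2.trans_le hb⟩) hab

lemma capMass_pos (n : ℕ) : 0 < capMass n :=
  intervalIntegral_capDensity_pos n le_rfl (by norm_num) le_rfl

lemma hasDerivAt_capCdf (n : ℕ) (s : ℝ) :
    HasDerivAt (capCdf n) (capDensity n s / capMass n) s :=
  (intervalIntegral.integral_hasDerivAt_right ((continuous_capDensity n).intervalIntegrable _ _)
    ((continuous_capDensity n).stronglyMeasurableAtFilter _ _)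
    (continuous_capDensity n).continuousAt).div_const _

lemma continuous_capCdf (n : ℕ) : Continuous (capCdf n) :=
  continuous_iff_continuousAt.2 fun s => (hasDerivAt_capCdf n s).continuousAt

@[simp] lemma capCdf_neg_one (n : ℕ) : capCdf n (-1) = 0 := by simp [capCdf]

@[simp] lemma capCdf_one (n : ℕ) : capCdf n 1 = 1 := div_self (capMass_pos n).ne'

lemma strictMonoOn_capCdf (n : ℕ) : StrictMonoOn (capCdf n) (Icc (-1) 1) := by
  intro a ha b hb hab
  refine (div_lt_div_iff_of_pos_right (capMass_pos n)).2 ?_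
  have hi := fun x y : ℝ => (continuous_capDensity n).intervalIntegrable (μ := volume) x y
  linarith [intervalIntegral.integral_add_adjacent_intervals (hi (-1) a) (hi a b),
    intervalIntegral_capDensity_pos n ha.1 hab hb.2]

/-- Truncation of a real number to `[-1, 1]`. -/
def clampUnit (s : ℝ) : ℝ := max (-1) (min 1 s)

lemma clampUnit_mem (s : ℝ) : clampUnit s ∈ Icc (-1 : ℝ) 1 :=
  ⟨le_max_left _ _, max_le (by norm_num) (min_le_left _ _)⟩

lemma clampUnit_of_mem {s : ℝ} (hs : s ∈ Icc (-1 : ℝ) 1) : clampUnit s = s := by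
  simp [clampUnit, hs.1, hs.2]

lemma monotone_clampUnit : Monotone clampUnit := fun _ _ h =>
  max_le_max le_rfl (min_le_min le_rfl h)

lemma continuous_clampUnit : Continuous clampUnit := by unfold clampUnit; fun_prop

lemma clampUnit_sub_le {a b : ℝ} (h : a ≤ b) : clampUnit b - clampUnit a ≤ b - a := by
  unfold clampUnit
  rcases max_cases (-1) (min 1 b) with h1 | h1 <;> rcases max_cases (-1) (min 1 a) with h2 | h2 <;>
    rcases min_cases 1 b with h3 | h3 <;> rcases min_cases 1 a with h4 | h4 <;> linarith

/-- `capCdf` extended to an increasing function on the line. -/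
def capCdfExt (n : ℕ) (s : ℝ) : ℝ := capCdf n (clampUnit s) + (s - clampUnit s)

lemma capCdfExt_of_mem (n : ℕ) {s : ℝ} (hs : s ∈ Icc (-1 : ℝ) 1) : capCdfExt n s = capCdf n s := by
  simp [capCdfExt, clampUnit_of_mem hs]

lemma strictMono_capCdfExt (n : ℕ) : StrictMono (capCdfExt n) := by
  intro a b hab
  have h := clampUnit_sub_le hab.le
  unfold capCdfExt
  rcases (monotone_clampUnit hab.le).eq_or_lt with heq | hlt
  · rw [heq]; linarith
  · linarith [strictMonoOn_capCdf n (clampUnit_mem a) (clampUnit_mem b) hlt]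

lemma capCdf_clampUnit_mem (n : ℕ) (s : ℝ) : capCdf n (clampUnit s) ∈ Icc (0 : ℝ) 1 := by
  have h := clampUnit_mem s
  have h1 := (strictMonoOn_capCdf n).monotoneOn (left_mem_Icc.2 (by norm_num)) h h.1
  have h2 := (strictMonoOn_capCdf n).monotoneOn h (right_mem_Icc.2 (by norm_num)) h.2
  rw [capCdf_neg_one] at h1
  rw [capCdf_one] at h2
  exact ⟨h1, h2⟩

lemma surjective_capCdfExt (n : ℕ) : Function.Surjective (capCdfExt n) := by
  refine Continuous.surjective ?_ ?_ ?_
  · have := continuous_clampUnit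
    have := continuous_capCdf n
    unfold capCdfExt; fun_prop
  · refine tendsto_atTop_mono (fun s => ?_)
      (tendsto_atTop_add_const_right atTop (-1 : ℝ) tendsto_id)
    have h1 := capCdf_clampUnit_mem n s
    have h2 := clampUnit_mem s
    simp only [capCdfExt, id]; linarith [h1.1, h2.2]
  · refine tendsto_atBot_mono (fun s => ?_) (tendsto_atBot_add_const_right atBot (2 : ℝ) tendsto_id)
    have h1 := capCdf_clampUnit_mem n s
    have h2 := clampUnit_mem s
    simp only [capCdfExt, id]; linarith [h1.2, h2.1]

/-- `capCdfExt` as an order isomorphism of the line. -/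
def capIso (n : ℕ) : ℝ ≃o ℝ :=
  (strictMono_capCdfExt n).orderIsoOfSurjective _ (surjective_capCdfExt n)

/-- The quantile function of the normalized `capDensity`. -/
def capInv (n : ℕ) (p : ℝ) : ℝ := clampUnit ((capIso n).symm p)

lemma continuous_capInv (n : ℕ) : Continuous (capInv n) :=
  continuous_clampUnit.comp (capIso n).symm.continuous

lemma monotone_capInv (n : ℕ) : Monotone (capInv n) :=
  monotone_clampUnit.comp (capIso n).symm.monotone

lemma capInv_mem (n : ℕ) (p : ℝ) : capInv n p ∈ Icc (-1 : ℝ) 1 := clampUnit_mem _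

lemma capInv_capCdf (n : ℕ) {s : ℝ} (hs : s ∈ Icc (-1 : ℝ) 1) : capInv n (capCdf n s) = s := by
  rw [capInv, ← capCdfExt_of_mem n hs]
  have : (capIso n).symm (capCdfExt n s) = s := (capIso n).symm_apply_apply s
  rw [this, clampUnit_of_mem hs]

lemma capInv_zero (n : ℕ) : capInv n 0 = -1 := by
  rw [← capCdf_neg_one n, capInv_capCdf n (by norm_num)]

lemma capInv_one (n : ℕ) : capInv n 1 = 1 := by
  have h := capInv_capCdf n (s := 1) (by norm_num)
  rwa [capCdf_one] at h

lemma capCdf_capInv (n : ℕ) {p : ℝ} (hp : p ∈ Icc (0 : ℝ) 1) : capCdf n (capInv n p) = p := by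
  have : Icc (0 : ℝ) 1 ⊆ capCdf n '' Icc (-1) 1 := by
    have := intermediate_value_Icc (f := capCdf n) (by norm_num : (-1 : ℝ) ≤ 1)
      (continuous_capCdf n).continuousOn
    simpa using this
  obtain ⟨s, hs, rfl⟩ := this hp
  rw [capInv_capCdf n hs]

lemma capInv_mem_Ioo (n : ℕ) {p : ℝ} (hp : p ∈ Ioo (0 : ℝ) 1) : capInv n p ∈ Ioo (-1 : ℝ) 1 := by
  have h := capInv_mem n p
  have hc := capCdf_capInv n (Ioo_subset_Icc_self hp)
  refine ⟨lt_of_le_of_ne h.1 fun h' => ?_, lt_of_le_of_ne h.2 fun h' => ?_⟩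
  · rw [← h', capCdf_neg_one] at hc; exact hp.1.ne hc
  · rw [h', capCdf_one] at hc; exact hp.2.ne hc.symm

lemma hasDerivAt_capInv (n : ℕ) {p : ℝ} (hp : p ∈ Ioo (0 : ℝ) 1) :
    HasDerivAt (capInv n) (capDensity n (capInv n p) / capMass n)⁻¹ p := by
  refine HasDerivAt.of_local_left_inverse (continuous_capInv n).continuousAt
    (hasDerivAt_capCdf n _)
    (div_pos (capDensity_pos n (capInv_mem_Ioo n hp)) (capMass_pos n)).ne' ?_
  filter_upwards [Ioo_mem_nhds hp.1 hp.2] with q hq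
  exact capCdf_capInv n (Ioo_subset_Icc_self hq)

/-- The volume of the slice `{x | x 0 = t}` of a set. -/
def sliceVol (B : Set (Euc (n + 1))) (t : ℝ) : ℝ≥0∞ := volume {x : Euc n | consE n (t, x) ∈ B}

/-- The volume of the part of a set lying below height `t`. -/
def headVol (B : Set (Euc (n + 1))) (t : ℝ) : ℝ := volume.real (B ∩ {x | x 0 ≤ t})

/-- The monotone map of the line transporting the head marginal of `B` to that of the unit ball. -/
def headMap (B : Set (Euc (n + 1))) (t : ℝ) : ℝ := capInv n (headVol B t / volume.real B)

lemma measurable_sliceVol {B : Set (Euc (n + 1))} (hB : MeasurableSet B) :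
    Measurable (sliceVol B) :=
  measurable_measure_prodMk_left ((consE n).measurable hB)

lemma lintegral_sliceVol {B : Set (Euc (n + 1))} (hB : MeasurableSet B) {S : Set ℝ}
    (hS : MeasurableSet S) : ∫⁻ t in S, sliceVol B t = volume (B ∩ {x | x 0 ∈ S}) := by
  have hm : MeasurableSet (B ∩ {x | x 0 ∈ S}) :=
    hB.inter (hS.preimage (by fun_prop : Measurable fun x : Euc (n + 1) => x 0))
  rw [← (measurePreserving_consE n).measure_preimage hm.nullMeasurableSet,
    Measure.volume_eq_prod, Measure.prod_apply ((consE n).measurable hm), ← lintegral_indicator hS]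
  congr 1 with t
  by_cases ht : t ∈ S
  · rw [indicator_of_mem ht, sliceVol]
    congr 1 with x; simp [ht]
  · rw [indicator_of_notMem ht, eq_comm]
    convert measure_empty (μ := (volume : Measure (Euc n)))
    ext x; simp [ht]

lemma ae_sliceVol_lt_top {B : Set (Euc (n + 1))} (hB : MeasurableSet B) (hfin : volume B ≠ ⊤) :
    ∀ᵐ t, sliceVol B t < ⊤ := by
  refine ae_lt_top (measurable_sliceVol hB) ?_
  rw [← setLIntegral_univ, lintegral_sliceVol hB MeasurableSet.univ]
  simpa using hfin

lemma integrable_sliceVol {B : Set (Euc (n + 1))} (hB : MeasurableSet B) (hfin : volume B ≠ ⊤) :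
    Integrable fun t => (sliceVol B t).toReal := by
  refine integrable_toReal_of_lintegral_ne_top (measurable_sliceVol hB).aemeasurable ?_
  rw [← setLIntegral_univ, lintegral_sliceVol hB MeasurableSet.univ]
  simpa using hfin

lemma setIntegral_sliceVol {B : Set (Euc (n + 1))} (hB : MeasurableSet B) (hfin : volume B ≠ ⊤)
    {S : Set ℝ} (hS : MeasurableSet S) :
    ∫ t in S, (sliceVol B t).toReal = volume.real (B ∩ {x | x 0 ∈ S}) := by
  rw [integral_toReal (measurable_sliceVol hB).aemeasurable
    (ae_restrict_of_ae (ae_sliceVol_lt_top hB hfin)), lintegral_sliceVol hB hS, measureReal_def]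

lemma headVol_sub {B : Set (Euc (n + 1))} (hB : MeasurableSet B) (hfin : volume B ≠ ⊤) (a b : ℝ) :
    headVol B b - headVol B a = ∫ t in a..b, (sliceVol B t).toReal := by
  rw [← intervalIntegral.integral_Iic_sub_Iic (integrable_sliceVol hB hfin).integrableOn
    (integrable_sliceVol hB hfin).integrableOn, setIntegral_sliceVol hB hfin measurableSet_Iic,
    setIntegral_sliceVol hB hfin measurableSet_Iic]
  rfl

lemma continuous_headVol {B : Set (Euc (n + 1))} (hB : MeasurableSet B) (hfin : volume B ≠ ⊤) :
    Continuous (headVol B) := by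
  have h : headVol B = fun t => headVol B 0 + ∫ s in (0 : ℝ)..t, (sliceVol B s).toReal := by
    ext t; rw [← headVol_sub hB hfin]; ring
  rw [h]
  exact continuous_const.add (intervalIntegral.continuous_primitive
    (fun a b => (integrable_sliceVol hB hfin).intervalIntegrable) 0)

lemma headVol_nonneg (B : Set (Euc (n + 1))) (t : ℝ) : 0 ≤ headVol B t := measureReal_nonneg

lemma headVol_le {B : Set (Euc (n + 1))} (hfin : volume B ≠ ⊤) (t : ℝ) :
    headVol B t ≤ volume.real B := measureReal_mono inter_subset_left hfin

lemma monotone_headVol {B : Set (Euc (n + 1))} (hfin : volume B ≠ ⊤) : Monotone (headVol B) :=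
  fun _ _ h => measureReal_mono (inter_subset_inter_right _ fun _ hx => le_trans hx h)
    ((measure_mono inter_subset_left).trans_lt hfin.lt_top).ne

lemma monotone_headMap (B : Set (Euc (n + 1))) : Monotone (headMap B) := by
  by_cases hfin : volume B = ⊤
  · intro a b _; simp [headMap, measureReal_def, hfin]
  · exact (monotone_capInv n).comp fun a b h =>
      div_le_div_of_nonneg_right (monotone_headVol hfin h) measureReal_nonneg

lemma headMap_mem (B : Set (Euc (n + 1))) (t : ℝ) : headMap B t ∈ Icc (-1 : ℝ) 1 := capInv_mem _ _

lemma ae_hasDerivAt_headVol {B : Set (Euc (n + 1))} (hB : MeasurableSet B)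
    (hfin : volume B ≠ ⊤) : ∀ᵐ t, HasDerivAt (headVol B) (sliceVol B t).toReal t := by
  filter_upwards [LocallyIntegrable.ae_hasDerivAt_integral
    (integrable_sliceVol hB hfin).locallyIntegrable] with t ht
  refine ((ht 0).const_add (headVol B 0)).congr_of_eventuallyEq (Eventually.of_forall fun s => ?_)
  simp only [← headVol_sub hB hfin]; ring

lemma headVol_mem_Ioo {B : Set (Euc (n + 1))} (hfin : volume B ≠ ⊤) {t γ : ℝ} (hγ : 0 < γ)
    (h : HasDerivAt (headVol B) γ t) : headVol B t ∈ Ioo 0 (volume.real B) := by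
  refine ⟨lt_of_le_of_ne (headVol_nonneg B t) fun h0 => hγ.ne' ?_,
    lt_of_le_of_ne (headVol_le hfin t) fun h1 => hγ.ne' ?_⟩
  · exact IsLocalMin.hasDerivAt_eq_zero (Eventually.of_forall fun s => h0 ▸ headVol_nonneg B s) h
  · exact IsLocalMax.hasDerivAt_eq_zero (Eventually.of_forall fun s => h1 ▸ headVol_le hfin s) h

lemma headVol_div_mem_Ioo {B : Set (Euc (n + 1))} {t : ℝ}
    (h : headVol B t ∈ Ioo 0 (volume.real B)) : headVol B t / volume.real B ∈ Ioo (0 : ℝ) 1 :=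
  ⟨div_pos h.1 (h.1.trans h.2), (div_lt_one (h.1.trans h.2)).2 h.2⟩

lemma hasDerivAt_headMap {B : Set (Euc (n + 1))} {t γ : ℝ}
    (ht : headVol B t ∈ Ioo 0 (volume.real B)) (h : HasDerivAt (headVol B) γ t) :
    HasDerivAt (headMap B)
      (γ * capMass n / (volume.real B * capDensity n (headMap B t))) t := by
  have hV := ht.1.trans ht.2
  have hp := headVol_div_mem_Ioo ht
  have hd := capDensity_pos n (capInv_mem_Ioo n hp)
  have := (hasDerivAt_capInv n hp).comp t (h.div_const _)
  refine this.congr_deriv ?_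
  change _ = γ * capMass n / (volume.real B * capDensity n (capInv n _))
  have hc := capMass_pos n
  field_simp

/-- The volume of the unit ball, sliced along the first axis. -/
lemma volume_unit_ball_succ (n : ℕ) : volume (ball (0 : Euc (n + 1)) 1) =
    ENNReal.ofReal (capMass n) * volume (ball (0 : Euc n) 1) := by
  have hslice : ∀ t : ℝ, sliceVol (ball (0 : Euc (n + 1)) 1) t =
      (Ioo (-1 : ℝ) 1).indicator (fun t => ENNReal.ofReal (capDensity n t) *
        volume (ball (0 : Euc n) 1)) t := by
    intro t
    have hset : {x : Euc n | consE n (t, x) ∈ ball (0 : Euc (n + 1)) 1} =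
        {x | t ^ 2 + ‖x‖ ^ 2 < 1} := by
      ext x
      have := norm_sq_eq_head_tail (consE n (t, x))
      simp only [consE_zero, tailE_consE] at this
      rw [mem_ofPred_eq, mem_ofPred_eq, mem_ball_zero_iff, ← this, sq_lt_one_iff₀ (norm_nonneg _)]
    rw [sliceVol, hset]
    by_cases ht : t ∈ Ioo (-1 : ℝ) 1
    · have hpos : 0 < 1 - t ^ 2 := by nlinarith [ht.1, ht.2]
      rw [indicator_of_mem ht]
      have : {x : Euc n | t ^ 2 + ‖x‖ ^ 2 < 1} = ball 0 (√(1 - t ^ 2)) := by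
        ext x
        rw [mem_ofPred_eq, mem_ball_zero_iff, Real.lt_sqrt (norm_nonneg _)]
        constructor <;> intro <;> linarith
      rw [this, Measure.addHaar_ball_of_pos volume _ (Real.sqrt_pos.2 hpos), capDensity]
      simp
    · rw [indicator_of_notMem ht]
      convert measure_empty (μ := (volume : Measure (Euc n)))
      rw [eq_empty_iff_forall_notMem]
      intro x hx
      rw [mem_ofPred_eq] at hx
      exact ht (abs_lt.1 ((sq_lt_one_iff_abs_lt_one t).1 (by nlinarith [sq_nonneg ‖x‖])))
  have h := lintegral_sliceVol (measurableSet_ball (x := (0 : Euc (n + 1))) (ε := 1))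
    MeasurableSet.univ
  simp only [mem_univ, ofPred_true, inter_univ, Measure.restrict_univ] at h
  rw [← h]
  simp_rw [hslice]
  rw [lintegral_indicator measurableSet_Ioo, lintegral_mul_const _
    (continuous_capDensity n).measurable.ennreal_ofReal, capMass,
    intervalIntegral.integral_of_le (by norm_num), integral_Ioc_eq_integral_Ioo,
    ofReal_integral_eq_lintegral_ofReal
    ((continuous_capDensity n).integrableOn_Icc.mono_set Ioo_subset_Icc_self)
    (Eventually.of_forall (capDensity_nonneg n))]

/-- A measurable family of maps to the unit ball, monotone along the axes, whose triangular Jacobian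
transports normalized volume on each fibre of `A` to normalized volume on the ball. -/
structure IsKnothe {Y : Type} [MeasurableSpace Y] (A : Set (Y × Euc n))
    (φ : Y × Euc n → Euc n) : Prop where
  measurable : Measurable φ
  norm_le : ∀ p, ‖φ p‖ ≤ 1
  mono : ∀ y x j (t : ℝ), 0 ≤ t → φ (y, x) j ≤ φ (y, x + t • stdE j) j
  det : ∀ y, volume (Prod.mk y ⁻¹' A) ≠ ⊤ → ∀ᵐ x, (y, x) ∈ A →
    (∏ j, lowerDeriv (fun x => φ (y, x)) j x) * volume (Prod.mk y ⁻¹' A) =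
      volume (ball (0 : Euc n) 1)

/-- One step of the Knothe construction. -/
def knotheSucc {Y : Type} (A : Set (Y × Euc (n + 1))) (φ : (Y × ℝ) × Euc n → Euc n)
    (p : Y × Euc (n + 1)) : Euc (n + 1) :=
  consE n (headMap (Prod.mk p.1 ⁻¹' A) (p.2 0),
    √(1 - headMap (Prod.mk p.1 ⁻¹' A) (p.2 0) ^ 2) • φ ((p.1, p.2 0), tailE p.2))

lemma measurable_headMap_fibre {Y : Type} [MeasurableSpace Y] {A : Set (Y × Euc (n + 1))}
    (hA : MeasurableSet A) : Measurable fun p : Y × ℝ => headMap (Prod.mk p.1 ⁻¹' A) p.2 := by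
  have h1 : Measurable fun p : Y × ℝ => headVol (Prod.mk p.1 ⁻¹' A) p.2 := by
    have hs : MeasurableSet {q : (Y × ℝ) × Euc (n + 1) | (q.1.1, q.2) ∈ A ∧ q.2 0 ≤ q.1.2} :=
      (hA.preimage (by fun_prop : Measurable fun q : (Y × ℝ) × Euc (n + 1) => (q.1.1, q.2))).inter
        (measurableSet_le (by fun_prop : Measurable fun q : (Y × ℝ) × Euc (n + 1) => q.2 0)
          (by fun_prop))
    exact (measurable_measure_prodMk_left hs).ennreal_toReal
  have h2 : Measurable fun p : Y × ℝ => volume.real (Prod.mk p.1 ⁻¹' A) :=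
    ((measurable_measure_prodMk_left hA).comp measurable_fst).ennreal_toReal
  exact (continuous_capInv n).measurable.comp (h1.div h2)

lemma measurable_knotheSucc {Y : Type} [MeasurableSpace Y] {A : Set (Y × Euc (n + 1))}
    (hA : MeasurableSet A) {φ : (Y × ℝ) × Euc n → Euc n} (hφ : Measurable φ) :
    Measurable (knotheSucc A φ) := by
  have h0 : Measurable fun p : Y × Euc (n + 1) => (p.1, p.2 0) := by fun_prop
  have hT := (measurable_headMap_fibre hA).comp h0
  have ht : Measurable fun p : Y × Euc (n + 1) => tailE p.2 :=
    measurable_tailE.comp measurable_snd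
  have hφ' := hφ.comp (h0.prodMk ht)
  exact (consE n).measurable.comp
    (hT.prodMk ((((hT.pow_const 2).const_sub 1).sqrt).smul hφ'))

lemma ofReal_mul_sub_tendsto {T : ℝ → ℝ} {d t : ℝ} (h : HasDerivAt T d t) :
    Tendsto (fun k : ℕ => ENNReal.ofReal (((k : ℝ) + 1) * (T (t + ((k : ℝ) + 1)⁻¹) - T t))) atTop
      (𝓝 (ENNReal.ofReal d)) := by
  refine ENNReal.tendsto_ofReal ((h.tendsto_slope_zero_right.comp
    tendsto_inv_nat_add_one_nhdsGT).congr fun k => ?_)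
  simp

section

variable {Y : Type} {A : Set (Y × Euc (n + 1))} {φ : (Y × ℝ) × Euc n → Euc n}

lemma knotheSucc_zero (y : Y) (x : Euc (n + 1)) :
    knotheSucc A φ (y, x) 0 = headMap (Prod.mk y ⁻¹' A) (x 0) := rfl

lemma knotheSucc_succ (y : Y) (x : Euc (n + 1)) (j : Fin n) :
    knotheSucc A φ (y, x) j.succ =
      √(1 - headMap (Prod.mk y ⁻¹' A) (x 0) ^ 2) * φ ((y, x 0), tailE x) j := rfl

lemma lowerDeriv_knotheSucc_zero (y : Y) (t : ℝ) (x : Euc n) {d : ℝ}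
    (h : HasDerivAt (headMap (Prod.mk y ⁻¹' A)) d t) :
    lowerDeriv (fun x => knotheSucc A φ (y, x)) 0 (consE n (t, x)) = ENNReal.ofReal d := by
  rw [lowerDeriv, ← (ofReal_mul_sub_tendsto h).liminf_eq]
  simp_rw [consE_add_stdE_zero, knotheSucc_zero, consE_zero]

lemma lowerDeriv_knotheSucc_succ (y : Y) (t : ℝ) (x : Euc n) (j : Fin n) :
    lowerDeriv (fun x => knotheSucc A φ (y, x)) j.succ (consE n (t, x)) =
      ENNReal.ofReal √(1 - headMap (Prod.mk y ⁻¹' A) t ^ 2) *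
        lowerDeriv (fun x => φ ((y, t), x)) j x := by
  rw [lowerDeriv, lowerDeriv, ← ENNReal.liminf_const_mul_of_ne_top ENNReal.ofReal_ne_top]
  congr 1 with k
  rw [consE_add_stdE_succ]
  simp only [knotheSucc_succ, consE_zero, tailE_consE]
  rw [← ENNReal.ofReal_mul (Real.sqrt_nonneg _)]
  congr 1; ring

end

lemma norm_knotheSucc_le {Y : Type} (A : Set (Y × Euc (n + 1)))
    {φ : (Y × ℝ) × Euc n → Euc n} (hφ : ∀ p, ‖φ p‖ ≤ 1) (p : Y × Euc (n + 1)) :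
    ‖knotheSucc A φ p‖ ≤ 1 := by
  rw [← sq_le_one_iff₀ (norm_nonneg _), norm_sq_eq_head_tail]
  simp only [knotheSucc, consE_zero, tailE_consE, norm_smul]
  have hT := headMap_mem (Prod.mk p.1 ⁻¹' A) (p.2 0)
  set T := headMap (Prod.mk p.1 ⁻¹' A) (p.2 0)
  have h1 : 0 ≤ 1 - T ^ 2 := by nlinarith [hT.1, hT.2]
  have h2 := (sq_le_one_iff₀ (norm_nonneg _)).2 (hφ ((p.1, p.2 0), tailE p.2))
  rw [mul_pow, Real.norm_eq_abs, sq_abs, Real.sq_sqrt h1]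
  nlinarith

lemma det_knotheSucc {Y : Type} [MeasurableSpace Y] {A : Set (Y × Euc (n + 1))}
    (hA : MeasurableSet A) {φ : (Y × ℝ) × Euc n → Euc n}
    (hφ : IsKnothe {q : (Y × ℝ) × Euc n | (q.1.1, consE n (q.1.2, q.2)) ∈ A} φ) (y : Y)
    (hy : volume (Prod.mk y ⁻¹' A) ≠ ⊤) : ∀ᵐ x, (y, x) ∈ A →
    (∏ j, lowerDeriv (fun x => knotheSucc A φ (y, x)) j x) * volume (Prod.mk y ⁻¹' A) =
      volume (ball (0 : Euc (n + 1)) 1) := by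
  set B := Prod.mk y ⁻¹' A with hBdef
  have hB : MeasurableSet B := measurable_prodMk_left hA
  have hmeas : Measurable fun x => knotheSucc A φ (y, x) :=
    (measurable_knotheSucc hA hφ.measurable).comp measurable_prodMk_left
  have hprod : Measurable fun x =>
      (∏ j, lowerDeriv (fun x => knotheSucc A φ (y, x)) j x) * volume B :=
    (Finset.univ.measurable_prod fun j _ => measurable_lowerDeriv hmeas j).mul_const _
  have hset : MeasurableSet {x | x ∈ B →
      (∏ j, lowerDeriv (fun x => knotheSucc A φ (y, x)) j x) * volume B =
        volume (ball (0 : Euc (n + 1)) 1)} := by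
    simp_rw [imp_iff_not_or]
    exact hB.compl.union (measurableSet_eq_fun hprod measurable_const)
  suffices h : ∀ᵐ p : ℝ × Euc n, consE n p ∈ B →
      (∏ j, lowerDeriv (fun x => knotheSucc A φ (y, x)) j (consE n p)) * volume B =
        volume (ball (0 : Euc (n + 1)) 1) by
    have := (ae_map_iff (consE n).measurable.aemeasurable hset).2 h
    rwa [(measurePreserving_consE n).map_eq] at this
  refine (Measure.ae_prod_iff_ae_ae ((consE n).measurable hset)).2 ?_
  filter_upwards [ae_sliceVol_lt_top hB hy, ae_hasDerivAt_headVol hB hy] with t ht hd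
  have hdet := hφ.det (y, t) ht.ne
  filter_upwards [hdet] with x hx hxA
  have hx' := hx hxA
  change _ * sliceVol B t = _ at hx'
  have hslice0 : sliceVol B t ≠ 0 := fun h0 =>
    (measure_ball_pos volume (0 : Euc n) one_pos).ne (by rw [← hx', h0, mul_zero])
  have hγ : 0 < (sliceVol B t).toReal := ENNReal.toReal_pos hslice0 ht.ne
  have hhead := headVol_mem_Ioo hy hγ hd
  have hT := hasDerivAt_headMap hhead hd
  have hV : 0 < volume.real B := hhead.1.trans hhead.2
  have hdens : 0 < capDensity n (headMap B t) :=
    capDensity_pos n (capInv_mem_Ioo n (headVol_div_mem_Ioo hhead))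
  rw [Fin.prod_univ_succ, lowerDeriv_knotheSucc_zero y t x hT]
  simp_rw [lowerDeriv_knotheSucc_succ]
  rw [Finset.prod_mul_distrib, Finset.prod_const, Finset.card_univ, Fintype.card_fin,
    ← ENNReal.ofReal_pow (Real.sqrt_nonneg _), volume_unit_ball_succ, ← hx',
    ← ENNReal.ofReal_toReal hy, ← hBdef]
  have key : ENNReal.ofReal ((sliceVol B t).toReal * capMass n /
      (volume.real B * capDensity n (headMap B t))) * ENNReal.ofReal (capDensity n (headMap B t)) *
      ENNReal.ofReal (volume.real B) = ENNReal.ofReal (capMass n) * sliceVol B t := by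
    have hc := capMass_pos n
    conv_rhs => rw [← ENNReal.ofReal_toReal ht.ne]
    rw [← ENNReal.ofReal_mul (by positivity), ← ENNReal.ofReal_mul (by positivity),
      ← ENNReal.ofReal_mul hc.le]
    congr 1
    field_simp
  change _ * (ENNReal.ofReal (capDensity n (headMap B t)) * _) * ENNReal.ofReal (volume.real B) = _
  rw [mul_left_comm (ENNReal.ofReal (capMass n)), ← key]
  change _ = (∏ j, lowerDeriv (fun x => φ ((y, t), x)) j x) * _
  ring

lemma isKnothe_knotheSucc {Y : Type} [MeasurableSpace Y] {A : Set (Y × Euc (n + 1))}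
    (hA : MeasurableSet A) {φ : (Y × ℝ) × Euc n → Euc n}
    (hφ : IsKnothe {q : (Y × ℝ) × Euc n | (q.1.1, consE n (q.1.2, q.2)) ∈ A} φ) :
    IsKnothe A (knotheSucc A φ) where
  measurable := measurable_knotheSucc hA hφ.measurable
  norm_le := norm_knotheSucc_le A hφ.norm_le
  mono y x j t ht := by
    rw [← consE_tailE x]
    refine Fin.cases ?_ (fun j => ?_) j
    · rw [consE_add_stdE_zero, knotheSucc_zero, knotheSucc_zero]
      exact monotone_headMap _ (by simpa using ht)
    · rw [consE_add_stdE_succ, knotheSucc_succ, knotheSucc_succ]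
      simp only [consE_zero, tailE_consE]
      exact mul_le_mul_of_nonneg_left (hφ.mono _ _ _ _ ht) (Real.sqrt_nonneg _)
  det := det_knotheSucc hA hφ

lemma exists_isKnothe (n : ℕ) : ∀ {Y : Type} [MeasurableSpace Y] {A : Set (Y × Euc n)},
    MeasurableSet A → ∃ φ, IsKnothe A φ := by
  induction n with
  | zero =>
    intro Y _ A hA
    refine ⟨fun _ => 0, measurable_const, fun _ => by simp, fun _ _ j => j.elim0, fun y _ => ?_⟩
    refine Eventually.of_forall fun x hx => ?_
    have h1 : Prod.mk y ⁻¹' A = univ := eq_univ_of_forall fun z => by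
      rw [mem_preimage, Subsingleton.elim z x]; exact hx
    have h2 : ball (0 : Euc 0) 1 = univ := eq_univ_of_forall fun z => by
      rw [Subsingleton.elim z 0]; exact mem_ball_self one_pos
    simp [h1, h2]
  | succ n ih =>
    intro Y _ A hA
    have hA' : MeasurableSet {q : (Y × ℝ) × Euc n | (q.1.1, consE n (q.1.2, q.2)) ∈ A} := by
      have hm : Measurable fun q : (Y × ℝ) × Euc n => (q.1.1, consE n (q.1.2, q.2)) :=
        (measurable_fst.comp measurable_fst).prodMk ((consE n).measurable.comp (by fun_prop))
      exact hA.preimage hm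
    obtain ⟨φ, hφ⟩ := ih hA'
    exact ⟨_, isKnothe_knotheSucc hA hφ⟩

/-- The Knothe map of a set of finite volume, with explicit first component. -/
lemma exists_knothe_map {Ω : Set (Euc (n + 1))} (hΩ : MeasurableSet Ω) (hfin : volume Ω ≠ ⊤) :
    ∃ f : Euc (n + 1) → Euc (n + 1), Measurable f ∧ (∀ x, ‖f x‖ ≤ 1) ∧
      (∀ j x (t : ℝ), 0 ≤ t → f x j ≤ f (x + t • stdE j) j) ∧
      (∀ x, f x 0 = headMap Ω (x 0)) ∧
      ∀ᵐ x, x ∈ Ω → (∏ j, lowerDeriv f j x) * volume Ω = volume (ball (0 : Euc (n + 1)) 1) := by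
  have hA : MeasurableSet (Prod.snd ⁻¹' Ω : Set (Unit × Euc (n + 1))) := measurable_snd hΩ
  have hA' : MeasurableSet {q : (Unit × ℝ) × Euc n |
      (q.1.1, consE n (q.1.2, q.2)) ∈ (Prod.snd ⁻¹' Ω : Set (Unit × Euc (n + 1)))} :=
    hΩ.preimage ((consE n).measurable.comp (by fun_prop))
  obtain ⟨φ, hφ⟩ := exists_isKnothe n hA'
  have h := isKnothe_knotheSucc hA hφ
  exact ⟨fun x => knotheSucc _ φ ((), x), h.measurable.comp measurable_prodMk_left,
    fun x => h.norm_le _, fun j x t ht => h.mono _ _ _ _ ht, fun x => rfl, h.det () hfin⟩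

/-- The inequality of arithmetic and geometric means for a product equal to one. -/
lemma card_le_sum_of_prod_eq_one {ι : Type*} [Fintype ι] {a : ι → ℝ≥0∞} (h : ∏ i, a i = 1) :
    (Fintype.card ι : ℝ≥0∞) ≤ ∑ i, a i ∧ (∑ i, a i ≤ Fintype.card ι → ∀ i, a i = 1) := by
  by_cases htop : ∃ i, a i = ⊤
  · have hs : ∑ i, a i = ⊤ := ENNReal.sum_eq_top.2 (by simpa using htop)
    simp [hs]
  push Not at htop
  lift a to ι → ℝ≥0 using htop
  beta_reduce at h ⊢
  have hprod : ∏ i, a i = 1 := by exact_mod_cast h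
  have hpos : ∀ i, 0 < (a i : ℝ) := fun i => by
    have : a i ≠ 0 := fun h0 => by
      rw [Finset.prod_eq_zero (Finset.mem_univ i) h0] at hprod
      exact zero_ne_one hprod
    exact_mod_cast pos_iff_ne_zero.2 this
  have hlog : ∑ i, Real.log (a i) = 0 := by
    rw [← Real.log_prod fun i _ => (hpos i).ne']
    have : ∏ i, (a i : ℝ) = 1 := by exact_mod_cast hprod
    rw [this, Real.log_one]
  have hle : ∀ i, Real.log (a i) ≤ a i - 1 := fun i => Real.log_le_sub_one_of_pos (hpos i)
  have hsum : ∑ i, ((a i : ℝ) - 1) = ∑ i, (a i : ℝ) - Fintype.card ι := by simp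
  constructor
  · have := Finset.sum_le_sum fun i (_ : i ∈ Finset.univ) => hle i
    rw [hlog, hsum] at this
    have h2 : (Fintype.card ι : ℝ) ≤ ∑ i, (a i : ℝ) := by linarith
    have h3 : ((Fintype.card ι : ℝ≥0)) ≤ ∑ i, a i := by exact_mod_cast h2
    exact_mod_cast h3
  · intro hs i
    have h3 : ∑ i, a i ≤ (Fintype.card ι : ℝ≥0) := by exact_mod_cast hs
    have h2 : ∑ i, (a i : ℝ) ≤ Fintype.card ι := by exact_mod_cast h3
    by_contra hne
    have hne' : (a i : ℝ) ≠ 1 := fun h => hne (by exact_mod_cast h)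
    have := Finset.sum_lt_sum (fun i (_ : i ∈ Finset.univ) => hle i)
      ⟨i, Finset.mem_univ i, Real.log_lt_sub_one_of_pos (hpos i) hne'⟩
    rw [hlog, hsum] at this
    linarith

lemma volume_ball_eq_pow_mul {R : ℝ} (hR : 0 < R) :
    volume (ball (0 : Euc n) R) = ENNReal.ofReal R ^ n * volume (ball (0 : Euc n) 1) := by
  rw [Measure.addHaar_ball_of_pos volume _ hR, ENNReal.ofReal_pow hR.le]
  simp

/-- The isoperimetric inequality, together with the form its equality case takes for the Knothe
map. -/
lemma isoperimetric_aux {Ω : Set (Euc (m + 1))} (hop : IsOpen Ω) (hbd : Bornology.IsBounded Ω)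
    {R : ℝ} (hR : 0 < R) (hvol : volume Ω = volume (ball (0 : Euc (m + 1)) R)) :
    ((m + 1 : ℕ) : ℝ≥0∞) * volume Ω ≤ ENNReal.ofReal R * μHE[m] (frontier Ω) ∧
    (ENNReal.ofReal R * μHE[m] (frontier Ω) ≤ ((m + 1 : ℕ) : ℝ≥0∞) * volume Ω →
      ∀ᵐ x ∂volume.restrict Ω, ∀ d, HasDerivAt (headMap Ω) d (x 0) → R * d = 1) := by
  have hfin : volume Ω ≠ ⊤ := hvol ▸ measure_ball_lt_top.ne
  obtain ⟨f, hf, hf1, hmono, hhead, hdet⟩ := exists_knothe_map hop.measurableSet hfin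
  have hdiv := lintegral_sum_lowerDeriv_le hop hbd hf hf1 hmono
  have hprod : ∀ᵐ x ∂volume.restrict Ω, ∏ j, ENNReal.ofReal R * lowerDeriv f j x = 1 := by
    rw [ae_restrict_iff' hop.measurableSet]
    filter_upwards [hdet] with x hx hxΩ
    have h := hx hxΩ
    rw [hvol, volume_ball_eq_pow_mul hR, ← mul_assoc] at h
    have h0 : volume (ball (0 : Euc (m + 1)) 1) ≠ 0 := (measure_ball_pos _ _ one_pos).ne'
    have ht : volume (ball (0 : Euc (m + 1)) 1) ≠ ⊤ := measure_ball_lt_top.ne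
    rw [Finset.prod_mul_distrib, Finset.prod_const, Finset.card_univ, Fintype.card_fin, mul_comm]
    exact (ENNReal.mul_left_inj h0 ht).1 (h.trans (one_mul _).symm)
  have hmeas : Measurable fun x => ∑ j, ENNReal.ofReal R * lowerDeriv f j x :=
    Finset.univ.measurable_sum fun j _ => (measurable_lowerDeriv hf j).const_mul _
  have hge : ∀ᵐ x ∂volume.restrict Ω,
      ((m + 1 : ℕ) : ℝ≥0∞) ≤ ∑ j, ENNReal.ofReal R * lowerDeriv f j x := by
    filter_upwards [hprod] with x hx
    simpa using (card_le_sum_of_prod_eq_one hx).1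
  have hconst : ∫⁻ _ in Ω, ((m + 1 : ℕ) : ℝ≥0∞) = ((m + 1 : ℕ) : ℝ≥0∞) * volume Ω := by simp
  have hup : ∫⁻ x in Ω, ∑ j, ENNReal.ofReal R * lowerDeriv f j x ≤
      ENNReal.ofReal R * μHE[m] (frontier Ω) := by
    simp_rw [← Finset.mul_sum]
    rw [lintegral_const_mul' _ _ ENNReal.ofReal_ne_top]
    gcongr
  refine ⟨hconst ▸ (lintegral_mono_ae hge).trans hup, fun heq => ?_⟩
  have hae := ae_eq_of_ae_le_of_lintegral_le hge (by
    rw [hconst]; exact ENNReal.mul_ne_top (ENNReal.natCast_ne_top _) hfin) hmeas.aemeasurable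
    (hconst ▸ hup.trans heq)
  filter_upwards [hprod, hae] with x hx hxe d hd
  have h1 := (card_le_sum_of_prod_eq_one hx).2 (by simpa using hxe.ge) 0
  have h2 : lowerDeriv f 0 x = ENNReal.ofReal d := by
    rw [lowerDeriv, ← (ofReal_mul_sub_tendsto hd).liminf_eq]
    simp [hhead]
  rw [h2, ← ENNReal.ofReal_mul hR.le, ENNReal.ofReal_eq_one] at h1
  exact h1

lemma isoperimetric {Ω : Set (Euc (m + 1))} (hop : IsOpen Ω) (hbd : Bornology.IsBounded Ω)
    {R : ℝ} (hR : 0 < R) (hvol : volume Ω = volume (ball (0 : Euc (m + 1)) R)) :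
    ((m + 1 : ℕ) : ℝ≥0∞) * volume Ω ≤ ENNReal.ofReal R * μHE[m] (frontier Ω) :=
  (isoperimetric_aux hop hbd hR hvol).1

/-- In the equality case the slice volumes are determined by the head map. -/
lemma sliceVol_eq_of_isoperimetric_eq {Ω : Set (Euc (m + 1))} (hop : IsOpen Ω)
    (hbd : Bornology.IsBounded Ω) {R : ℝ} (hR : 0 < R)
    (hvol : volume Ω = volume (ball (0 : Euc (m + 1)) R))
    (heq : ENNReal.ofReal R * μHE[m] (frontier Ω) ≤ ((m + 1 : ℕ) : ℝ≥0∞) * volume Ω) :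
    ∀ᵐ t, sliceVol Ω t ≠ 0 →
      (sliceVol Ω t).toReal = volume.real Ω / (R * capMass m) * capDensity m (headMap Ω t) := by
  have hfin : volume Ω ≠ ⊤ := hvol ▸ measure_ball_lt_top.ne
  have h := (isoperimetric_aux hop hbd hR hvol).2 heq
  rw [ae_restrict_iff' hop.measurableSet] at h
  have h' : ∀ᵐ p : ℝ × Euc m, consE m p ∈ Ω →
      ∀ d, HasDerivAt (headMap Ω) d p.1 → R * d = 1 :=
    (measurePreserving_consE m).quasiMeasurePreserving.ae h
  rw [Measure.volume_eq_prod] at h'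
  filter_upwards [Measure.ae_ae_of_ae_prod h', ae_sliceVol_lt_top hop.measurableSet hfin,
    ae_hasDerivAt_headVol hop.measurableSet hfin] with t ht hlt hd h0
  obtain ⟨x, hxΩ, hx⟩ : ∃ x : Euc m, consE m (t, x) ∈ Ω ∧
      (consE m (t, x) ∈ Ω → ∀ d, HasDerivAt (headMap Ω) d t → R * d = 1) := by
    by_contra hcon
    push Not at hcon
    refine h0 (measure_mono_null (fun x hx => ?_) ht)
    intro hx'
    obtain ⟨-, d, hd1, hd2⟩ := hcon x hx
    exact hd2 (hx' hx d hd1)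
  have hγ := ENNReal.toReal_pos h0 hlt.ne
  have hhead := headVol_mem_Ioo hfin hγ hd
  have := hx hxΩ _ (hasDerivAt_headMap hhead hd)
  have hV : 0 < volume.real Ω := hhead.1.trans hhead.2
  have hdens : 0 < capDensity m (headMap Ω t) :=
    capDensity_pos m (capInv_mem_Ioo m (headVol_div_mem_Ioo hhead))
  have hc := capMass_pos m
  field_simp at this ⊢
  linarith

lemma exists_ball_volume_eq {v : ℝ≥0∞} {R : ℝ} (h0 : v ≠ 0)
    (hlt : v < volume (ball (0 : Euc (m + 1)) R)) :
    ∃ ρ : ℝ, 0 < ρ ∧ ρ < R ∧ v = volume (ball (0 : Euc (m + 1)) ρ) := by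
  set ω := volume (ball (0 : Euc (m + 1)) 1) with hω
  have hω0 : ω ≠ 0 := (measure_ball_pos _ _ one_pos).ne'
  have hωt : ω ≠ ⊤ := measure_ball_lt_top.ne
  have hq : v / ω ≠ ⊤ := ENNReal.div_ne_top hlt.ne_top hω0
  have hq0 : 0 < (v / ω).toReal := ENNReal.toReal_pos (ENNReal.div_ne_zero.2 ⟨h0, hωt⟩) hq
  set ρ := (v / ω).toReal ^ ((m + 1 : ℕ) : ℝ)⁻¹ with hρ
  have hρ0 : 0 < ρ := Real.rpow_pos_of_pos hq0 _
  have hv : v = volume (ball (0 : Euc (m + 1)) ρ) := by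
    rw [volume_ball_eq_pow_mul hρ0, ← ENNReal.ofReal_pow hρ0.le, hρ,
      Real.rpow_inv_natCast_pow hq0.le (Nat.succ_ne_zero m), ENNReal.ofReal_toReal hq,
      ENNReal.div_mul_cancel hω0 hωt]
  refine ⟨ρ, hρ0, ?_, hv⟩
  by_contra! hle
  exact absurd (measure_mono (ball_subset_ball hle)) (not_le.2 (hv ▸ hlt))

/-- The isoperimetric inequality is strict when measured against a larger ball. -/
lemma isoperimetric_strict {Ω : Set (Euc (m + 1))} (hop : IsOpen Ω) (hbd : Bornology.IsBounded Ω)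
    {R : ℝ} (h0 : volume Ω ≠ 0) (hlt : volume Ω < volume (ball (0 : Euc (m + 1)) R))
    (hfin : μHE[m] (frontier Ω) ≠ ⊤) :
    ((m + 1 : ℕ) : ℝ≥0∞) * volume Ω < ENNReal.ofReal R * μHE[m] (frontier Ω) := by
  obtain ⟨ρ, hρ, hρR, hv⟩ := exists_ball_volume_eq h0 hlt
  have h := isoperimetric hop hbd hρ hv
  refine h.trans_lt ?_
  have hne : μHE[m] (frontier Ω) ≠ 0 := by
    intro hz
    rw [hz, mul_zero, nonpos_iff_eq_zero, mul_eq_zero] at h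
    exact h.elim (by simp) h0
  rw [ENNReal.mul_lt_mul_iff_left hne hfin]
  exact (ENNReal.ofReal_lt_ofReal_iff (hρ.trans hρR)).2 hρR

lemma frontier_inter_subset_of_separated {X : Type*} [TopologicalSpace X] {Ω U F : Set X}
    (hop : IsOpen Ω)
    (hU : IsOpen U) (hF : IsClosed F) (hUF : U ⊆ F) (hdis : ∀ x ∈ Ω, x ∈ F → x ∈ U) :
    frontier (Ω ∩ U) ⊆ frontier Ω ∩ F := by
  intro x hx
  rw [(hop.inter hU).frontier_eq] at hx
  have h1 : x ∈ F := closure_minimal (inter_subset_right.trans hUF) hF hx.1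
  refine ⟨?_, h1⟩
  rw [hop.frontier_eq]
  exact ⟨closure_mono inter_subset_left hx.1, fun hΩ => hx.2 ⟨hΩ, hdis x hΩ h1⟩⟩

lemma notMem_of_sliceVol_eq_zero {Ω : Set (Euc (m + 1))} (hop : IsOpen Ω) {x : Euc (m + 1)}
    (h : sliceVol Ω (x 0) = 0) : x ∉ Ω := by
  intro hx
  have hc : Continuous fun z : Euc m => consE m (x 0, z) := by
    have : (fun z : Euc m => consE m (x 0, z)) =
        fun z => WithLp.toLp 2 (Fin.cons (x 0) z.ofLp) := by
      ext z i; refine Fin.cases ?_ (fun i => ?_) i <;> rfl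
    rw [this]
    refine (PiLp.continuous_toLp 2 _).comp (continuous_pi fun i => ?_)
    refine Fin.cases ?_ (fun i => ?_) i
    · exact continuous_const
    · simp only [Fin.cons_succ]; fun_prop
  have hne : {z : Euc m | consE m (x 0, z) ∈ Ω}.Nonempty := ⟨tailE x, by simpa using hx⟩
  exact ((hop.preimage hc).measure_pos volume hne).ne' h

/-- The heights which properly split the volume of a set. -/
def heightRange (Ω : Set (Euc (m + 1))) : Set ℝ := headVol Ω ⁻¹' Ioo 0 (volume.real Ω)

lemma isOpen_heightRange {Ω : Set (Euc (m + 1))} (hΩ : MeasurableSet Ω) (hfin : volume Ω ≠ ⊤) :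
    IsOpen (heightRange Ω) := isOpen_Ioo.preimage (continuous_headVol hΩ hfin)

lemma ordConnected_heightRange {Ω : Set (Euc (m + 1))} (hfin : volume Ω ≠ ⊤) :
    (heightRange Ω).OrdConnected := ordConnected_Ioo.preimage_mono (monotone_headVol hfin)

lemma continuous_coord (j : Fin n) : Continuous fun x : Euc n => x j := by fun_prop

lemma volume_real_above {Ω : Set (Euc (m + 1))} (hfin : volume Ω ≠ ⊤) (s : ℝ) :
    volume.real (Ω ∩ {x | s < x 0}) = volume.real Ω - headVol Ω s := by
  have hle : MeasurableSet {x : Euc (m + 1) | x 0 ≤ s} :=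
    (isClosed_le (continuous_coord 0) continuous_const).measurableSet
  have h := measureReal_inter_add_sdiff (μ := volume) (s := Ω) hle hfin
  have hd : Ω \ {x | x 0 ≤ s} = Ω ∩ {x | s < x 0} := by ext x; simp
  rw [hd] at h
  rw [headVol]; linarith

lemma mem_heightRange {Ω : Set (Euc (m + 1))} (hop : IsOpen Ω) (hfin : volume Ω ≠ ⊤)
    {x : Euc (m + 1)} (hx : x ∈ Ω) : x 0 ∈ heightRange Ω := by
  obtain ⟨ε, hε, hball⟩ := Metric.isOpen_iff.1 hop x hx
  have hmem : ∀ t : ℝ, |t| < ε → x + t • stdE 0 ∈ Ω := fun t ht => hball (by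
    simpa [norm_smul] using ht)
  have hpos : ∀ {U : Set (Euc (m + 1))}, IsOpen U → (Ω ∩ U).Nonempty →
      0 < volume.real (Ω ∩ U) := fun hU hne =>
    ENNReal.toReal_pos ((hop.inter hU).measure_pos volume hne).ne'
      ((measure_mono inter_subset_left).trans_lt hfin.lt_top).ne
  have h1 := hpos (isOpen_lt (continuous_coord 0) (continuous_const (y := x 0)))
    ⟨x + (-(ε / 2)) • stdE 0, hmem _ (by rw [abs_neg, abs_of_pos] <;> linarith), by simp [hε]⟩
  have h2 := hpos (isOpen_lt (continuous_const (y := x 0)) (continuous_coord 0))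
    ⟨x + (ε / 2) • stdE 0, hmem _ (by rw [abs_of_pos] <;> linarith), by simp [hε]⟩
  rw [volume_real_above hfin] at h2
  refine ⟨h1.trans_le (measureReal_mono (inter_subset_inter_right _ fun y hy =>
    (mem_ofPred_eq.mp hy).le)
    ((measure_mono inter_subset_left).trans_lt hfin.lt_top).ne), by linarith⟩

/-- In the equality case of the isoperimetric inequality almost no slice is empty. -/
lemma ae_sliceVol_ne_zero {Ω : Set (Euc (m + 1))} (hop : IsOpen Ω)
    (hbd : Bornology.IsBounded Ω) {R : ℝ} (hR : 0 < R)
    (hvol : volume Ω = volume (ball (0 : Euc (m + 1)) R))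
    (heq : ENNReal.ofReal R * μHE[m] (frontier Ω) ≤ ((m + 1 : ℕ) : ℝ≥0∞) * volume Ω) :
    ∀ᵐ s, s ∈ heightRange Ω → sliceVol Ω s ≠ 0 := by
  have hfin : volume Ω ≠ ⊤ := hvol ▸ measure_ball_lt_top.ne
  have hRe : ENNReal.ofReal R ≠ 0 := (ENNReal.ofReal_pos.2 hR).ne'
  have hnV : ((m + 1 : ℕ) : ℝ≥0∞) * volume Ω ≠ ⊤ :=
    ENNReal.mul_ne_top (ENNReal.natCast_ne_top _) hfin
  have hS : μHE[m] (frontier Ω) ≠ ⊤ := fun h => by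
    rw [h, ENNReal.mul_top hRe, top_le_iff] at heq
    exact hnV heq
  have : IsFiniteMeasure (μHE[m].restrict (frontier Ω)) := ⟨by simpa using hS.lt_top⟩
  have hcount := Measure.countable_meas_level_set_pos (μ := μHE[m].restrict (frontier Ω))
    (continuous_coord (n := m + 1) 0).measurable
  filter_upwards [hcount.ae_notMem volume] with s hs hsr h0
  have hs0 : μHE[m].restrict (frontier Ω) {x : Euc (m + 1) | x 0 = s} = 0 := by
    simpa using hs
  have hempty : ∀ x ∈ Ω, x 0 ≠ s := fun x hx hxs =>
    notMem_of_sliceVol_eq_zero hop (x := x) (hxs ▸ h0) hx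
  set L : Set (Euc (m + 1)) := {x | x 0 < s}
  set U : Set (Euc (m + 1)) := {x | s < x 0}
  set L' : Set (Euc (m + 1)) := {x | x 0 ≤ s}
  set U' : Set (Euc (m + 1)) := {x | s ≤ x 0}
  have hLo : IsOpen L := isOpen_lt (continuous_coord 0) continuous_const
  have hUo : IsOpen U := isOpen_lt continuous_const (continuous_coord 0)
  have hLc : IsClosed L' := isClosed_le (continuous_coord 0) continuous_const
  have hUc : IsClosed U' := isClosed_le continuous_const (continuous_coord 0)
  have hfL : frontier (Ω ∩ L) ⊆ frontier Ω ∩ L' :=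
    frontier_inter_subset_of_separated hop hLo hLc (fun x (hx : x 0 < s) => mem_ofPred.mpr hx.le)
      fun x hx h => lt_of_le_of_ne h (hempty x hx)
  have hfU : frontier (Ω ∩ U) ⊆ frontier Ω ∩ U' :=
    frontier_inter_subset_of_separated hop hUo hUc (fun x (hx : s < x 0) => mem_ofPred.mpr hx.le)
      fun x hx h => lt_of_le_of_ne h (hempty x hx).symm
  have hLL : Ω ∩ L = Ω ∩ L' := by
    ext x
    refine ⟨fun h => ⟨h.1, (mem_ofPred.mp h.2).le⟩,
      fun h => ⟨h.1, lt_of_le_of_ne h.2 (hempty x h.1)⟩⟩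
  have hdiff : Ω \ L' = Ω ∩ U := by ext x; simp [L', U]
  have hsplit : volume (Ω ∩ L) + volume (Ω ∩ U) = volume Ω := by
    rw [hLL, ← hdiff]; exact measure_inter_add_sdiff _ hLc.measurableSet
  have hL0 : volume (Ω ∩ L) ≠ 0 := fun h => by
    have := hsr.1
    rw [hLL] at h
    rw [headVol, measureReal_def, h] at this
    simp at this
  have hU0 : volume (Ω ∩ U) ≠ 0 := fun h => by
    have h1 := volume_real_above hfin s
    change volume.real (Ω ∩ U) = _ at h1
    rw [measureReal_def, h] at h1
    have := hsr.2
    simp only [ENNReal.toReal_zero] at h1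
    linarith
  have hLlt : volume (Ω ∩ L) < volume Ω := by
    rw [← hsplit]
    exact ENNReal.lt_add_right ((measure_mono inter_subset_left).trans_lt hfin.lt_top).ne hU0
  have hUlt : volume (Ω ∩ U) < volume Ω := by
    rw [← hsplit, add_comm (volume (Ω ∩ L))]
    exact ENNReal.lt_add_right ((measure_mono inter_subset_left).trans_lt hfin.lt_top).ne hL0
  have hmL : μHE[m] (frontier (Ω ∩ L)) ≤ μHE[m] (frontier Ω ∩ L') := measure_mono hfL
  have hmU : μHE[m] (frontier (Ω ∩ U)) ≤ μHE[m] (frontier Ω \ L') := by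
    refine (measure_mono hfU).trans ?_
    have : frontier Ω ∩ U' ⊆ (frontier Ω \ L') ∪ ({x | x 0 = s} ∩ frontier Ω) := by
      rintro x ⟨hx, hxs⟩
      rcases (show s ≤ x 0 from hxs).eq_or_lt with h | h
      · exact Or.inr ⟨h.symm, hx⟩
      · exact Or.inl ⟨hx, not_le.2 h⟩
    refine (measure_mono this).trans ((measure_union_le _ _).trans ?_)
    change _ + μHE[m] ((fun x : Euc (m + 1) => x 0) ⁻¹' {s} ∩ frontier Ω) ≤ _
    rw [← Measure.restrict_apply ((measurableSet_singleton s).preimage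
      (continuous_coord 0).measurable)]
    exact (congrArg _ hs0).trans (add_zero _) |>.le
  have htot : μHE[m] (frontier (Ω ∩ L)) + μHE[m] (frontier (Ω ∩ U)) ≤ μHE[m] (frontier Ω) :=
    (add_le_add hmL hmU).trans (measure_inter_add_sdiff _ hLc.measurableSet).le
  have hLi := isoperimetric_strict (hop.inter hLo) (hbd.subset inter_subset_left) hL0
    (hvol ▸ hLlt) (ne_top_of_le_ne_top hS (le_self_add.trans htot))
  have hUi := isoperimetric_strict (hop.inter hUo) (hbd.subset inter_subset_left) hU0
    (hvol ▸ hUlt) (ne_top_of_le_ne_top hS (le_add_self.trans htot))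
  have hcontra := ENNReal.add_lt_add hLi hUi
  rw [← mul_add, ← mul_add, hsplit] at hcontra
  exact absurd (hcontra.trans_le ((mul_le_mul_right htot _).trans heq)) (lt_irrefl _)

lemma continuous_headMap {B : Set (Euc (n + 1))} (hB : MeasurableSet B) (hfin : volume B ≠ ⊤) :
    Continuous (headMap B) :=
  (continuous_capInv n).comp ((continuous_headVol hB hfin).div_const _)

lemma headMap_mem_Ioo {B : Set (Euc (n + 1))} {t : ℝ} (ht : t ∈ heightRange B) :
    headMap B t ∈ Ioo (-1 : ℝ) 1 := capInv_mem_Ioo n (headVol_div_mem_Ioo ht)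

lemma mem_heightRange_of_headMap_mem {B : Set (Euc (n + 1))} (hfin : volume B ≠ ⊤)
    (hpos : 0 < volume.real B) {t : ℝ} (ht : headMap B t ∈ Ioo (-1 : ℝ) 1) :
    t ∈ heightRange B := by
  refine ⟨lt_of_le_of_ne (headVol_nonneg B t) fun h => ?_,
    lt_of_le_of_ne (headVol_le hfin t) fun h => ?_⟩
  · rw [headMap, ← h, zero_div, capInv_zero] at ht
    exact lt_irrefl _ ht.1
  · rw [headMap, h, div_self hpos.ne', capInv_one] at ht
    exact lt_irrefl _ ht.2

/-- The marginal of a set along the first coordinate. -/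
lemma map_head_restrict {B : Set (Euc (n + 1))} (hB : MeasurableSet B) :
    Measure.map (fun x : Euc (n + 1) => x 0) (volume.restrict B) =
      volume.withDensity (sliceVol B) := by
  ext S hS
  have hm := (continuous_coord (n := n + 1) 0).measurable
  rw [Measure.map_apply hm hS, Measure.restrict_apply (hm hS), withDensity_apply _ hS,
    lintegral_sliceVol hB hS, inter_comm]
  rfl

lemma setIntegral_head {B : Set (Euc (n + 1))} (hB : MeasurableSet B) (hfin : volume B ≠ ⊤)
    {h : ℝ → ℝ} (hh : Continuous h) :
    ∫ x in B, h (x 0) = ∫ t, (sliceVol B t).toReal * h t := by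
  have hm := (continuous_coord (n := n + 1) 0).measurable
  rw [← integral_map (μ := volume.restrict B) (φ := fun x : Euc (n + 1) => x 0) (f := h)
    hm.aemeasurable hh.aestronglyMeasurable, map_head_restrict hB,
    integral_withDensity_eq_integral_toReal_smul (measurable_sliceVol hB)
      (ae_sliceVol_lt_top hB hfin)]
  rfl

section

variable {Ω : Set (Euc (m + 1))} {R : ℝ}

/-- In the equality case the head map has constant slope. -/
lemma hasDerivAt_headMap_of_isoperimetric_eq (hop : IsOpen Ω) (hbd : Bornology.IsBounded Ω)
    (hR : 0 < R) (hvol : volume Ω = volume (ball (0 : Euc (m + 1)) R))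
    (heq : ENNReal.ofReal R * μHE[m] (frontier Ω) ≤ ((m + 1 : ℕ) : ℝ≥0∞) * volume Ω)
    {t : ℝ} (ht : t ∈ heightRange Ω) : HasDerivAt (headMap Ω) R⁻¹ t := by
  have hfin : volume Ω ≠ ⊤ := hvol ▸ measure_ball_lt_top.ne
  have hΩ := hop.measurableSet
  set κ := volume.real Ω / (R * capMass m)
  have hcont : Continuous fun s => κ * capDensity m (headMap Ω s) :=
    continuous_const.mul ((continuous_capDensity m).comp (continuous_headMap hΩ hfin))
  have hae : ∀ᵐ s, s ∈ heightRange Ω →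
      (sliceVol Ω s).toReal = κ * capDensity m (headMap Ω s) := by
    filter_upwards [sliceVol_eq_of_isoperimetric_eq hop hbd hR hvol heq,
      ae_sliceVol_ne_zero hop hbd hR hvol heq] with s h1 h2 h3 using h1 (h2 h3)
  have hd : HasDerivAt (headVol Ω) (κ * capDensity m (headMap Ω t)) t := by
    have hintg : HasDerivAt (fun s => headVol Ω t +
        ∫ u in t..s, κ * capDensity m (headMap Ω u)) (κ * capDensity m (headMap Ω t)) t :=
      (intervalIntegral.integral_hasDerivAt_right (hcont.intervalIntegrable _ _)
        (hcont.stronglyMeasurableAtFilter _ _) hcont.continuousAt).const_add _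
    refine hintg.congr_of_eventuallyEq ?_
    filter_upwards [(isOpen_heightRange hΩ hfin).mem_nhds ht] with s hs
    rw [← sub_eq_iff_eq_add', headVol_sub hΩ hfin]
    refine intervalIntegral.integral_congr_ae ?_
    filter_upwards [hae] with u hu hmem
    exact hu ((ordConnected_heightRange hfin).uIcc_subset ht hs (uIoc_subset_uIcc hmem))
  refine (hasDerivAt_headMap ht hd).congr_deriv ?_
  have hV : 0 < volume.real Ω := ht.1.trans ht.2
  have hdens := capDensity_pos m (headMap_mem_Ioo ht)
  have hc := capMass_pos m
  simp only [κ]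
  field_simp

/-- In the equality case the set lies in a slab of width `2 R` centred at its barycentre. -/
lemma slab_of_isoperimetric_eq (hop : IsOpen Ω) (hbd : Bornology.IsBounded Ω) (hne : Ω.Nonempty)
    (hR : 0 < R) (hvol : volume Ω = volume (ball (0 : Euc (m + 1)) R))
    (heq : ENNReal.ofReal R * μHE[m] (frontier Ω) ≤ ((m + 1 : ℕ) : ℝ≥0∞) * volume Ω) :
    ∃ a : ℝ, (∀ x ∈ Ω, |x 0 - a| ≤ R) ∧ ∫ x in Ω, (x 0 - a) = 0 := by
  have hfin : volume Ω ≠ ⊤ := hvol ▸ measure_ball_lt_top.ne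
  have hΩ := hop.measurableSet
  have hder := fun t (ht : t ∈ heightRange Ω) =>
    hasDerivAt_headMap_of_isoperimetric_eq hop hbd hR hvol heq ht
  have hopen := isOpen_heightRange hΩ hfin
  obtain ⟨x₀, hx₀⟩ := hne
  have ht₀ := mem_heightRange hop hfin hx₀
  have hV : 0 < volume.real Ω := ht₀.1.trans ht₀.2
  have hder' : ∀ t ∈ heightRange Ω, HasDerivAt (fun t => headMap Ω t - R⁻¹ * t) 0 t := by
    intro t ht
    exact ((hder t ht).fun_sub ((hasDerivAt_id' t).const_mul R⁻¹)).congr_deriv (by simp)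
  obtain ⟨b, hb⟩ := hopen.exists_is_const_of_deriv_eq_zero
    (ordConnected_heightRange hfin).isPreconnected
    (fun t ht => (hder' t ht).differentiableAt.differentiableWithinAt)
    (fun t ht => (hder' t ht).deriv)
  set a := -(R * b) with ha
  have haff : ∀ t ∈ heightRange Ω, headMap Ω t = (t - a) / R := by
    intro t ht
    have := hb t ht
    rw [ha]; field_simp; field_simp at this; linarith
  have hsub : ∀ t ∈ heightRange Ω, |t - a| < R := by
    intro t ht
    have h1 := headMap_mem_Ioo ht
    rw [haff t ht] at h1
    have h1 := abs_lt.2 ⟨h1.1, h1.2⟩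
    rwa [abs_div, abs_of_pos hR, div_lt_one hR] at h1
  have hsup : ball a R ⊆ heightRange Ω := by
    refine (convex_ball a R).isPreconnected.subset_of_closure_inter_subset hopen
      ⟨x₀ 0, hsub _ ht₀, ht₀⟩ ?_
    rintro t ⟨ht, hta⟩
    have hclos : EqOn (headMap Ω) (fun t => (t - a) / R) (closure (heightRange Ω)) :=
      Set.EqOn.closure haff (continuous_headMap hΩ hfin) (by fun_prop)
    refine mem_heightRange_of_headMap_mem hfin hV ?_
    rw [hclos ht]
    refine abs_lt.1 ?_
    rw [abs_div, abs_of_pos hR, div_lt_one hR]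
    exact hta
  refine ⟨a, fun x hx => (hsub _ (mem_heightRange hop hfin hx)).le, ?_⟩
  set w : ℝ → ℝ := fun t => (ball a R).indicator
    (fun t => volume.real Ω / (R * capMass m) * capDensity m ((t - a) / R)) t * (t - a) with hw
  have hslice : ∀ᵐ t, (sliceVol Ω t).toReal * (t - a) = w t := by
    filter_upwards [sliceVol_eq_of_isoperimetric_eq hop hbd hR hvol heq,
      ae_sliceVol_ne_zero hop hbd hR hvol heq] with t h1 h2
    simp only [hw]
    congr 1
    by_cases ht : t ∈ ball a R
    · rw [indicator_of_mem ht, h1 (h2 (hsup ht)), haff t (hsup ht)]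
    · rw [indicator_of_notMem ht]
      have hempty : {x : Euc m | consE m (t, x) ∈ Ω} = ∅ := by
        rw [eq_empty_iff_forall_notMem]
        exact fun x hx => ht (hsub t (mem_heightRange hop hfin hx))
      rw [sliceVol, hempty]
      simp
  rw [setIntegral_head hΩ hfin (h := fun t => t - a) (by fun_prop), integral_congr_ae hslice]
  have hodd : ∀ t, w (2 * a - t) = -w t := by
    intro t
    have hb : 2 * a - t ∈ ball a R ↔ t ∈ ball a R := by
      rw [mem_ball, mem_ball, Real.dist_eq, Real.dist_eq, abs_sub_comm t a]
      ring_nf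
    have hc : (2 * a - t - a) / R = -((t - a) / R) := by ring
    simp only [hw]
    by_cases ht : t ∈ ball a R
    · rw [indicator_of_mem ht, indicator_of_mem (hb.2 ht), hc, capDensity_neg]; ring
    · rw [indicator_of_notMem ht, indicator_of_notMem (mt hb.1 ht)]; ring
  have h := integral_sub_left_eq_self w volume (2 * a)
  simp_rw [hodd] at h
  rw [integral_neg] at h
  linarith

end

/-- Radial projection to the unit sphere does not increase distances outside the unit ball. -/
lemma dist_normalize_le {E : Type*} [NormedAddCommGroup E] [InnerProductSpace ℝ E] {u v : E}
    (hu : 1 ≤ ‖u‖) (hv : 1 ≤ ‖v‖) : dist (‖u‖⁻¹ • u) (‖v‖⁻¹ • v) ≤ dist u v := by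
  have hu0 : 0 < ‖u‖ := by linarith
  have hv0 : 0 < ‖v‖ := by linarith
  rw [dist_eq_norm, dist_eq_norm]
  refine le_of_sq_le_sq ?_ (norm_nonneg _)
  rw [norm_sub_sq_real, norm_sub_sq_real, real_inner_smul_left, real_inner_smul_right, norm_smul,
    norm_smul, norm_inv, norm_inv, norm_norm, norm_norm, inv_mul_cancel₀ hu0.ne',
    inv_mul_cancel₀ hv0.ne']
  set a := ‖u‖
  set b := ‖v‖
  set s := a⁻¹ * (b⁻¹ * inner ℝ u v) with hs
  have h1 : inner ℝ u v = a * b * s := by rw [hs]; field_simp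
  have h2 : s ≤ 1 := by
    have := real_inner_le_norm u v
    rw [h1] at this
    by_contra! h
    nlinarith [mul_pos hu0 hv0]
  rw [h1]
  nlinarith [sq_nonneg (a - b), mul_nonneg (sub_nonneg.2 (one_le_mul_of_one_le_of_one_le hu hv))
    (sub_nonneg.2 h2)]

/-- The part of the closed unit ball spanned by the rays through `A`. -/
def unitCone (A : Set (Euc n)) : Set (Euc n) := {x | ‖x‖ ≤ 1 ∧ ‖x‖⁻¹ • x ∈ A}

lemma measurableSet_unitCone {A : Set (Euc n)} (hA : MeasurableSet A) :
    MeasurableSet (unitCone A) := by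
  have h : Measurable fun x : Euc n => ‖x‖⁻¹ • x := by fun_prop
  exact (measurableSet_le measurable_norm measurable_const).inter (h hA)

/-- Spherical sets in a small cap about the pole: surface measure against volume of the cone. -/
lemma euclideanHausdorffMeasure_le_volume_unitCone_pole {A : Set (Euc (m + 1))}
    (hA : MeasurableSet A) {c : ℝ} (hc : 0 < c) (hsph : ∀ x ∈ A, ‖x‖ = 1)
    (hcap : ∀ x ∈ A, c ≤ x 0) :
    ENNReal.ofReal (c ^ (m + 1)) * μHE[m] A ≤ ((m + 1 : ℕ) : ℝ≥0∞) * volume (unitCone A) := by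
  set φ : Euc m → Euc (m + 1) := fun y => ‖consE m (1, y)‖⁻¹ • consE m (1, y) with hφ
  have hone : ∀ y, 1 ≤ ‖consE m (1, y)‖ := fun y => by
    have h := norm_sq_eq_head_tail (consE m (1, y))
    simp only [consE_zero, tailE_consE] at h
    nlinarith [norm_nonneg (consE m (1, y)), sq_nonneg ‖y‖]
  have hlip : LipschitzWith 1 φ := by
    refine LipschitzWith.of_dist_le_mul fun y z => ?_
    rw [NNReal.coe_one, one_mul]
    refine (dist_normalize_le (hone y) (hone z)).trans (le_of_eq ?_)
    rw [dist_eq_norm, dist_eq_norm, ← sq_eq_sq₀ (norm_nonneg _) (norm_nonneg _),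
      norm_sq_eq_head_tail, tailE_sub]
    simp
  set A' : Set (Euc m) := φ ⁻¹' A with hA'
  have himage : A ⊆ φ '' A' := by
    intro x hx
    have hx0 : 0 < x 0 := hc.trans_le (hcap x hx)
    have hcons : consE m (1, (x 0)⁻¹ • tailE x) = (x 0)⁻¹ • x := by
      ext j
      refine Fin.cases ?_ (fun j => ?_) j <;> simp [hx0.ne']
    have hval : φ ((x 0)⁻¹ • tailE x) = x := by
      simp only [hφ, hcons, norm_smul, norm_inv, hsph x hx, Real.norm_eq_abs, abs_of_pos hx0,
        smul_smul]
      simp [hx0.ne']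
    exact ⟨_, by rw [hA', mem_preimage, hval]; exact hx, hval⟩
  have hmeas : μHE[m] A ≤ volume A' := by
    rw [← EuclideanSpace.euclideanHausdorffMeasure_eq_volume]
    exact (measure_mono himage).trans (hlip.euclideanHausdorffMeasure_image_le m A')
  have hslice : ∀ t ∈ Ioc 0 c, ENNReal.ofReal (t ^ m) * volume A' ≤ sliceVol (unitCone A) t := by
    intro t ht
    have hs := Measure.addHaar_smul_of_nonneg (volume : Measure (Euc m)) ht.1.le A'
    rw [finrank_euclideanSpace_fin] at hs
    rw [← hs]
    refine measure_mono ?_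
    rintro _ ⟨y, hy, rfl⟩
    have hcons : consE m (t, t • y) = t • consE m (1, y) := by
      ext j
      refine Fin.cases ?_ (fun j => ?_) j <;> simp
    have hnorm : ‖t • consE m (1, y)‖ = t * ‖consE m (1, y)‖ := by
      rw [norm_smul, Real.norm_eq_abs, abs_of_pos ht.1]
    have hpos : 0 < ‖consE m (1, y)‖ := zero_lt_one.trans_le (hone y)
    have hle : c * ‖consE m (1, y)‖ ≤ 1 := by
      have h := hcap _ hy
      simp only [hφ, PiLp.smul_apply, consE_zero, smul_eq_mul, mul_one] at h
      rwa [← le_inv_mul_iff₀' hpos, mul_one]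
    refine mem_ofPred.mpr ⟨?_, ?_⟩
    · show ‖consE m (t, t • y)‖ ≤ 1
      rw [hcons, hnorm]
      nlinarith [ht.2]
    · show ‖consE m (t, t • y)‖⁻¹ • consE m (t, t • y) ∈ A
      rw [hcons, hnorm, smul_smul, mul_inv, mul_right_comm, inv_mul_cancel₀ ht.1.ne', one_mul]
      exact hy
  have hintg : ∫⁻ t in Ioc 0 c, ENNReal.ofReal (t ^ m) =
      ENNReal.ofReal (c ^ (m + 1) / (m + 1)) := by
    rw [← ofReal_integral_eq_lintegral_ofReal, ← intervalIntegral.integral_of_le hc.le,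
      integral_pow]
    · simp
    · exact (intervalIntegrable_iff_integrableOn_Ioc_of_le hc.le).1
        ((continuous_pow m).intervalIntegrable _ _)
    · filter_upwards [ae_restrict_mem measurableSet_Ioc] with t ht using pow_nonneg ht.1.le m
  have hcone := measurableSet_unitCone hA
  calc ENNReal.ofReal (c ^ (m + 1)) * μHE[m] A
      ≤ ENNReal.ofReal (c ^ (m + 1)) * volume A' := by gcongr
    _ = ((m + 1 : ℕ) : ℝ≥0∞) * (ENNReal.ofReal (c ^ (m + 1) / (m + 1)) * volume A') := by
      rw [← mul_assoc, ← ENNReal.ofReal_natCast, ← ENNReal.ofReal_mul (by positivity)]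
      congr 2
      push_cast
      field_simp
    _ = ((m + 1 : ℕ) : ℝ≥0∞) * ∫⁻ t in Ioc 0 c, ENNReal.ofReal (t ^ m) * volume A' := by
      rw [lintegral_mul_const _ (by fun_prop), hintg]
    _ ≤ ((m + 1 : ℕ) : ℝ≥0∞) * ∫⁻ t in Ioc 0 c, sliceVol (unitCone A) t := by
      gcongr 1
      exact setLIntegral_mono (measurable_sliceVol hcone) hslice
    _ ≤ ((m + 1 : ℕ) : ℝ≥0∞) * volume (unitCone A) := by
      gcongr 1
      rw [lintegral_sliceVol hcone measurableSet_Ioc]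
      exact measure_mono inter_subset_left

lemma euclideanHausdorffMeasure_le_volume_unitCone {A : Set (Euc (m + 1))}
    (hA : MeasurableSet A) {c : ℝ} (hc : 0 < c) (hsph : ∀ x ∈ A, ‖x‖ = 1) {p : Euc (m + 1)}
    (hp : ‖p‖ = 1) (hcap : ∀ x ∈ A, c ≤ inner ℝ p x) :
    ENNReal.ofReal (c ^ (m + 1)) * μHE[m] A ≤ ((m + 1 : ℕ) : ℝ≥0∞) * volume (unitCone A) := by
  obtain ⟨L, hL⟩ := exists_isometry_stdE_zero p hp
  have h := euclideanHausdorffMeasure_le_volume_unitCone_pole (A := L ⁻¹' A)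
    (L.continuous.measurable hA) hc (fun x hx => by rw [← L.norm_map]; exact hsph _ hx)
    (fun x hx => by
      have := hcap _ hx
      rw [← hL, L.inner_map_map, EuclideanSpace.inner_single_left] at this
      simpa using this)
  rw [L.isometry.euclideanHausdorffMeasure_preimage, L.surjective.range_eq, inter_univ] at h
  rw [← volume_linearIsometryEquiv_preimage L]
  convert h using 3
  ext x
  simp [unitCone]

lemma mul_euclideanHausdorffMeasure_unit_sphere_le {c : ℝ} (hc : 0 < c) (hc1 : c < 1) :
    ENNReal.ofReal (c ^ (m + 1)) * μHE[m] (sphere (0 : Euc (m + 1)) 1) ≤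
      ((m + 1 : ℕ) : ℝ≥0∞) * volume (ball (0 : Euc (m + 1)) 1) := by
  have hne : (sphere (0 : Euc (m + 1)) 1).Nonempty := ⟨stdE 0, by simp⟩
  have : Nonempty (sphere (0 : Euc (m + 1)) 1) := hne.to_subtype
  set p : ℕ → sphere (0 : Euc (m + 1)) 1 := TopologicalSpace.denseSeq _
  have hp : ∀ i, ‖(p i : Euc (m + 1))‖ = 1 := fun i => by simp
  set cap : ℕ → Set (Euc (m + 1)) := fun i => sphere 0 1 ∩ {x | c < inner ℝ (p i : Euc (m + 1)) x}
    with hcapdef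
  have hcap : ∀ i, MeasurableSet (cap i) := fun i =>
    isClosed_sphere.measurableSet.inter
      (isOpen_lt continuous_const (continuous_const.inner continuous_id)).measurableSet
  have hcover : sphere (0 : Euc (m + 1)) 1 = ⋃ i, disjointed cap i := by
    rw [iUnion_disjointed]
    refine Subset.antisymm (fun x hx => ?_) (iUnion_subset fun i => inter_subset_left)
    have hopen : IsOpen {y : sphere (0 : Euc (m + 1)) 1 | c < inner ℝ (y : Euc (m + 1)) x} :=
      isOpen_lt continuous_const (continuous_subtype_val.inner continuous_const)
    obtain ⟨i, hi⟩ := (TopologicalSpace.denseRange_denseSeq _).exists_mem_open hopen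
      ⟨⟨x, hx⟩, by
        refine mem_ofPred.mpr ?_
        rw [real_inner_self_eq_norm_sq, mem_sphere_zero_iff_norm.1 hx]
        simpa using hc1⟩
    exact mem_iUnion.2 ⟨i, hx, hi⟩
  have hmeas : ∀ i, MeasurableSet (disjointed cap i) := MeasurableSet.disjointed hcap
  have hle := fun i => disjointed_subset cap i
  calc _ = ∑' i, ENNReal.ofReal (c ^ (m + 1)) * μHE[m] (disjointed cap i) := by
        rw [hcover, measure_iUnion (disjoint_disjointed cap) hmeas, ENNReal.tsum_mul_left]
    _ ≤ ∑' i, ((m + 1 : ℕ) : ℝ≥0∞) * volume (unitCone (disjointed cap i)) := by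
        refine ENNReal.tsum_le_tsum fun i => ?_
        exact euclideanHausdorffMeasure_le_volume_unitCone (hmeas i) hc
          (fun x hx => by simpa using (hle i hx).1) (hp i)
          (fun x hx => (mem_ofPred.mp (hle i hx).2).le)
    _ = ((m + 1 : ℕ) : ℝ≥0∞) * volume (⋃ i, unitCone (disjointed cap i)) := by
        rw [ENNReal.tsum_mul_left, measure_iUnion _ fun i => measurableSet_unitCone (hmeas i)]
        exact fun i j hij => Set.disjoint_left.2 fun x hx hy =>
          Set.disjoint_left.1 (disjoint_disjointed cap hij) hx.2 hy.2
    _ ≤ ((m + 1 : ℕ) : ℝ≥0∞) * volume (ball (0 : Euc (m + 1)) 1) := by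
        rw [← Measure.addHaar_closedBall_eq_addHaar_ball]
        gcongr
        exact iUnion_subset fun i x hx => by simpa using hx.1

lemma mul_euclideanHausdorffMeasure_sphere_le {R : ℝ} (hR : 0 < R) :
    ENNReal.ofReal R * μHE[m] (sphere (0 : Euc (m + 1)) R) ≤
      ((m + 1 : ℕ) : ℝ≥0∞) * volume (ball (0 : Euc (m + 1)) R) := by
  have hunit : μHE[m] (sphere (0 : Euc (m + 1)) 1) ≤
      ((m + 1 : ℕ) : ℝ≥0∞) * volume (ball (0 : Euc (m + 1)) 1) := by
    have hfin : ((m + 1 : ℕ) : ℝ≥0∞) * volume (ball (0 : Euc (m + 1)) 1) ≠ ⊤ :=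
      ENNReal.mul_ne_top (ENNReal.natCast_ne_top _) measure_ball_lt_top.ne
    have hlim : Tendsto (fun c : ℝ => ENNReal.ofReal (c ^ (m + 1)) *
        μHE[m] (sphere (0 : Euc (m + 1)) 1)) (𝓝[<] 1)
        (𝓝 (ENNReal.ofReal (1 ^ (m + 1)) * μHE[m] (sphere (0 : Euc (m + 1)) 1))) := by
      refine ENNReal.Tendsto.mul_const (ENNReal.tendsto_ofReal ?_) (Or.inl (by simp))
      exact ((continuous_pow (m + 1)).tendsto 1).mono_left nhdsWithin_le_nhds
    rw [one_pow, ENNReal.ofReal_one, one_mul] at hlim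
    refine le_of_tendsto hlim ?_
    filter_upwards [Ioo_mem_nhdsLT (zero_lt_one' ℝ)] with c hc
    exact mul_euclideanHausdorffMeasure_unit_sphere_le hc.1 hc.2
  have hscale : sphere (0 : Euc (m + 1)) R = R • sphere (0 : Euc (m + 1)) 1 := by
    rw [smul_sphere' hR.ne', smul_zero, mul_one, Real.norm_eq_abs, abs_of_pos hR]
  have hnn : (‖R‖₊ : ℝ≥0∞) = ENNReal.ofReal R := by
    rw [ENNReal.ofReal, Real.toNNReal_eq_nnnorm_of_nonneg hR.le]
  rw [hscale, Measure.euclideanHausdorffMeasure_smul₀ m hR.ne', volume_ball_eq_pow_mul hR,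
    ENNReal.smul_def, ENNReal.coe_pow, hnn, smul_eq_mul, ← mul_assoc, ← pow_succ', mul_left_comm]
  gcongr

lemma slab_of_isoperimetric_eq_direction {Ω : Set (Euc (m + 1))} {R : ℝ} (hop : IsOpen Ω)
    (hbd : Bornology.IsBounded Ω) (hne : Ω.Nonempty)
    (hR : 0 < R) (hvol : volume Ω = volume (ball (0 : Euc (m + 1)) R))
    (heq : ENNReal.ofReal R * μHE[m] (frontier Ω) ≤ ((m + 1 : ℕ) : ℝ≥0∞) * volume Ω)
    {θ : Euc (m + 1)} (hθ : ‖θ‖ = 1) :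
    ∃ a : ℝ, (∀ x ∈ Ω, |inner ℝ θ x - a| ≤ R) ∧ ∫ x in Ω, (inner ℝ θ x - a) = 0 := by
  obtain ⟨L, hL⟩ := exists_isometry_stdE_zero θ hθ
  have hcoord : ∀ y, inner ℝ θ (L y) = y 0 := fun y => by
    rw [← hL, L.inner_map_map, EuclideanSpace.inner_single_left]
    simp
  obtain ⟨a, hslab, hbary⟩ := slab_of_isoperimetric_eq (Ω := L ⁻¹' Ω) (R := R)
    (hop.preimage L.continuous)
    (L.isometry.antilipschitz.isBounded_preimage hbd)
    (hne.preimage L.surjective) hR (by rw [volume_linearIsometryEquiv_preimage, hvol])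
    (by
      rw [volume_linearIsometryEquiv_preimage]
      have hfr : frontier (L ⁻¹' Ω) = L ⁻¹' frontier Ω := (L.toHomeomorph.preimage_frontier Ω).symm
      rwa [hfr, L.isometry.euclideanHausdorffMeasure_preimage, L.surjective.range_eq, inter_univ])
  refine ⟨a, fun x hx => ?_, ?_⟩
  · obtain ⟨y, rfl⟩ := L.surjective x
    rw [hcoord]
    exact hslab y hx
  · rw [← hbary, ← L.measurePreserving.setIntegral_preimage_emb
      L.toMeasurableEquiv.measurableEmbedding]
    simp_rw [hcoord]

/-- A bounded open set attaining equality in the isoperimetric inequality lies in a ball of the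
same volume. -/
lemma subset_ball_of_isoperimetric_eq {Ω : Set (Euc (m + 1))} {R : ℝ} (hop : IsOpen Ω)
    (hbd : Bornology.IsBounded Ω) (hne : Ω.Nonempty)
    (hR : 0 < R) (hvol : volume Ω = volume (ball (0 : Euc (m + 1)) R))
    (heq : ENNReal.ofReal R * μHE[m] (frontier Ω) ≤ ((m + 1 : ℕ) : ℝ≥0∞) * volume Ω) :
    ∃ c, Ω ⊆ ball c R := by
  have hfin : volume Ω ≠ ⊤ := hvol ▸ measure_ball_lt_top.ne
  have hV : volume.real Ω ≠ 0 :=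
    (ENNReal.toReal_pos (hop.measure_pos volume hne).ne' hfin).ne'
  have hintg : IntegrableOn (fun x : Euc (m + 1) => x) Ω := by
    obtain ⟨C, hC⟩ := hbd.exists_norm_le
    exact Measure.integrableOn_of_bounded hfin (by fun_prop)
      ((ae_restrict_iff' hop.measurableSet).2 (Eventually.of_forall hC))
  set c := (volume.real Ω)⁻¹ • ∫ x in Ω, x with hc
  have hsub : Ω ⊆ closedBall c R := by
    intro x hx
    rw [mem_closedBall, dist_eq_norm]
    rcases eq_or_ne (x - c) 0 with h0 | h0
    · rw [h0, norm_zero]; exact hR.le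
    set θ := ‖x - c‖⁻¹ • (x - c) with hθ
    have hn : 0 < ‖x - c‖ := norm_pos_iff.2 h0
    have hθ1 : ‖θ‖ = 1 := by rw [hθ, norm_smul, norm_inv, norm_norm, inv_mul_cancel₀ hn.ne']
    obtain ⟨a, hslab, hbary⟩ :=
      slab_of_isoperimetric_eq_direction hop hbd hne hR hvol heq hθ1
    have ha : a = inner ℝ θ c := by
      have hin : IntegrableOn (fun x => inner ℝ θ x) Ω := Integrable.const_inner (𝕜 := ℝ) θ hintg
      have hca : IntegrableOn (fun _ => a) Ω := integrableOn_const hfin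
      rw [integral_sub hin hca, integral_inner hintg,
        setIntegral_const, smul_eq_mul] at hbary
      rw [hc, real_inner_smul_right]
      field_simp
      linarith
    have h := hslab x hx
    rw [ha, ← inner_sub_right, hθ, real_inner_smul_left, real_inner_self_eq_norm_sq, sq,
      inv_mul_cancel_left₀ hn.ne', abs_norm] at h
    exact h
  refine ⟨c, ?_⟩
  rw [← interior_closedBall c hR.ne']
  exact interior_maximal hsub hop

end

open MeasureTheory Metric

/-- A bounded open set `Ω ⊆ ℝⁿ` (equal to the interior of its closure) having the
volume of a ball of radius `r` and the boundary surface area ((n-1)-dimensional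
Hausdorff measure) of a sphere of radius `r` must be a ball of radius `r`. -/
theorem stokes_stmt_9 (n : ℕ) (hn : 2 ≤ n) (r : ℝ) (hr : 0 < r)
    (Ω : Set (EuclideanSpace ℝ (Fin n)))
    (hne : Ω.Nonempty) (hbd : Bornology.IsBounded Ω) (hop : IsOpen Ω)
    (hreg : Ω = interior (closure Ω))
    (hvol : volume Ω = volume (ball (0 : EuclideanSpace ℝ (Fin n)) r))
    (harea : μH[(n : ℝ) - 1] (frontier Ω)
      = μH[(n : ℝ) - 1] (sphere (0 : EuclideanSpace ℝ (Fin n)) r)) :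
    ∃ c : EuclideanSpace ℝ (Fin n), Ω = ball c r := by
  obtain ⟨m, rfl⟩ : ∃ m, n = m + 1 := ⟨n - 1, by omega⟩
  have hm : ((m + 1 : ℕ) : ℝ) - 1 = (m : ℝ) := by push_cast; ring
  rw [hm] at harea
  have harea' : μHE[m] (frontier Ω) = μHE[m] (sphere (0 : Euc (m + 1)) r) := by
    simp only [Measure.euclideanHausdorffMeasure_def, Measure.smul_apply, harea]
  have heq : ENNReal.ofReal r * μHE[m] (frontier Ω) ≤ ((m + 1 : ℕ) : ENNReal) * volume Ω := by
    rw [harea', hvol]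
    exact mul_euclideanHausdorffMeasure_sphere_le hr
  obtain ⟨c, hsub⟩ := subset_ball_of_isoperimetric_eq hop hbd hne hr hvol heq
  refine ⟨c, hsub.antisymm ?_⟩
  have hnull : volume (ball c r \ Ω) = 0 := by
    rw [measure_sdiff hsub hop.measurableSet.nullMeasurableSet (hvol ▸ measure_ball_lt_top.ne),
      hvol, Measure.addHaar_ball_center, tsub_self]
  have hclos : ball c r ⊆ closure Ω := by
    have hempty : ball c r \ closure Ω = ∅ :=
      (isOpen_ball.sdiff isClosed_closure).measure_eq_zero_iff volume |>.1
        (measure_mono_null (Set.sdiff_subset_sdiff_right subset_closure) hnull)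
    exact Set.sdiff_eq_empty.1 hempty
  rw [hreg]
  exact interior_maximal hclos isOpen_ball
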